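/- arXiv:2202.03526 — 9 statements merged into one kernel-verified Lean document; each statement's English description precedes it below -/
import Mathlib

section
/- Let X and Y be full Λ-lattices in A. Then C := { λ ∈ A : Xλ ⊆ Y } is a full O_r(X)-lattice in A. Moreover, X and Y are isomorphic as Λ-modules if and only if (a) there exists α ∈ A^× such that C = O_r(X)·α, and (b) Y = XC. Furthermore, when this is the case, Y = Xα. -/
theorem aux_cancel {R K A : Type*} [CommRing R] [IsDomain R]
    [Field K] [Algebra R K] [IsFractionRing R K] [Ring A] [Algebra K A]
    [Algebra R A] [IsScalarTower R K A] {s : R} (hs : s ≠ 0) {a b : A}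
    (h : s • a = s • b) : a = b := by
  rw [← algebraMap_smul K s a, ← algebraMap_smul K s b] at h
  have hk : algebraMap R K s ≠ 0 := by
    simpa using hs
  exact (smul_right_injective A hk) h

theorem aux_clear {R K A : Type*} [CommRing R] [IsDomain R]
    [Field K] [Algebra R K] [IsFractionRing R K] [Ring A] [Algebra K A]
    [Algebra R A] [IsScalarTower R K A] (Y : Submodule R A)
    (hY : Submodule.span K (Y : Set A) = ⊤) (a : A) : ∃ s : R, s ≠ 0 ∧ s • a ∈ Y := by
  have ha : a ∈ Submodule.span K (Y : Set A) := hY ▸ Submodule.mem_top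
  induction ha using Submodule.span_induction with
  | mem x hx => exact ⟨1, one_ne_zero, by simpa using hx⟩
  | zero => exact ⟨1, one_ne_zero, by simp⟩
  | add x y _ _ hx hy =>
    obtain ⟨s, hs, hsx⟩ := hx
    obtain ⟨t, ht, hty⟩ := hy
    refine ⟨s * t, mul_ne_zero hs ht, ?_⟩
    rw [smul_add]
    refine Y.add_mem ?_ ?_
    · rw [mul_comm, mul_smul]; exact Y.smul_mem _ hsx
    · rw [mul_smul]; exact Y.smul_mem _ hty
  | smul k x _ hx =>
    obtain ⟨s, hs, hsx⟩ := hx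
    obtain ⟨p, q, hq, rfl⟩ := IsFractionRing.div_surjective (A := R) k
    have hq0 : q ≠ 0 := nonZeroDivisors.ne_zero hq
    have hk : algebraMap R K q ≠ 0 := by simpa using hq0
    refine ⟨q * s, mul_ne_zero hq0 hs, ?_⟩
    have : (q * s) • ((algebraMap R K p / algebraMap R K q) • x) = p • (s • x) := by
      rw [← algebraMap_smul K (q * s), ← algebraMap_smul K p, ← algebraMap_smul K s,
        smul_smul, smul_smul, map_mul]
      congr 1
      field_simp
    rw [this]
    exact Y.smul_mem _ hsx

theorem aux_clear_fg {R K A : Type*} [CommRing R] [IsDomain R]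
    [Field K] [Algebra R K] [IsFractionRing R K] [Ring A] [Algebra K A]
    [Algebra R A] [IsScalarTower R K A] (Y : Submodule R A)
    (hY : Submodule.span K (Y : Set A) = ⊤) (X : Submodule R A) (hX : X.FG) (a : A) :
    ∃ s : R, s ≠ 0 ∧ ∀ x ∈ X, s • (x * a) ∈ Y := by
  induction X, hX using Submodule.fg_induction with
  | singleton x =>
    obtain ⟨s, hs, h⟩ := aux_clear Y hY (x * a)
    refine ⟨s, hs, fun z hz => ?_⟩
    obtain ⟨r, rfl⟩ := Submodule.mem_span_singleton.1 hz
    rw [smul_mul_assoc, smul_comm]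
    exact Y.smul_mem _ h
  | sup M N _ _ hM hN =>
    obtain ⟨s, hs, h⟩ := hM
    obtain ⟨t, ht, h'⟩ := hN
    refine ⟨s * t, mul_ne_zero hs ht, fun z hz => ?_⟩
    obtain ⟨m, hm, n, hn, rfl⟩ := Submodule.mem_sup.1 hz
    rw [add_mul, smul_add]
    refine Y.add_mem ?_ ?_
    · rw [mul_comm, mul_smul]; exact Y.smul_mem _ (h m hm)
    · rw [mul_smul]; exact Y.smul_mem _ (h' n hn)

theorem aux_iso {R K A : Type*} [CommRing R] [IsDomain R]
    [Field K] [Algebra R K] [IsFractionRing R K] [Ring A] [Algebra K A]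
    [Algebra R A] [IsScalarTower R K A] (Λ : Subalgebra R A)
    (hΛfull : Submodule.span K (Λ : Set A) = ⊤)
    (X Y : Submodule R A) 
    (hXfull : Submodule.span K (X : Set A) = ⊤) (e : ↥X →ₗ[R] ↥Y)
    (he : ∀ l ∈ Λ, ∀ (x : ↥X) (x' : ↥X), (x' : A) = l * (x : A) →
            (e x' : A) = l * (e x : A)) : ∃ α : A, ∀ x : ↥X, (e x : A) = x * α := by
  obtain ⟨r, hr, h1⟩ := aux_clear X hXfull (1 : A)
  have hk : algebraMap R K r ≠ 0 := by simpa using hr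
  refine ⟨(algebraMap R K r)⁻¹ • (e ⟨_, h1⟩ : A), fun x => ?_⟩
  obtain ⟨s, hs, h2⟩ := aux_clear (Subalgebra.toSubmodule Λ) hΛfull (x : A)
  have h3 := he (s • (x : A)) h2 ⟨_, h1⟩ ((s * r) • x) (by
    rw [Submodule.coe_smul, mul_smul_comm, mul_one, smul_smul, mul_comm])
  generalize e ⟨_, h1⟩ = z at h3 ⊢
  apply aux_cancel (K := K) (mul_ne_zero hs hr)
  rw [map_smul] at h3
  rw [Submodule.coe_smul] at h3
  rw [h3, mul_smul_comm, mul_smul, ← algebraMap_smul K r, smul_smul, mul_inv_cancel₀ hk,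
    one_smul, smul_mul_assoc]


/-- Let `R` be a noetherian integral domain with field of fractions `K ≠ R`, `A` a
finite-dimensional `K`-algebra, `Λ` an `R`-order in `A`, and let `X, Y` be full
`Λ`-lattices in `A`.  Then `C := { c ∈ A : Xc ⊆ Y }` is a full `O_r(X)`-lattice in `A`,
where `O_r(X) = { μ ∈ A : Xμ ⊆ X }` is the right order of `X`.  Moreover, `X` and `Y` are
isomorphic as `Λ`-modules if and only if (a) there exists `α ∈ A^×` with `C = O_r(X)·α`
and (b) `Y = XC`; and when this is the case, `Y = Xα`. -/
theorem stmt_4 {R K A : Type*}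
    [CommRing R] [IsDomain R] [IsNoetherianRing R]
    [Field K] [Algebra R K] [IsFractionRing R K]
    (hRK : ¬Function.Surjective (algebraMap R K))
    [Ring A] [Algebra K A] [FiniteDimensional K A]
    [Algebra R A] [IsScalarTower R K A]
    (Λ : Subalgebra R A)
    (hΛfg : (Subalgebra.toSubmodule Λ).FG)
    (hΛfull : Submodule.span K (Λ : Set A) = ⊤)
    (X Y : Submodule R A) (hXfg : X.FG) (hYfg : Y.FG)
    (hXΛ : ∀ l ∈ Λ, ∀ x ∈ X, l * x ∈ X) (hYΛ : ∀ l ∈ Λ, ∀ y ∈ Y, l * y ∈ Y)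
    (hXfull : Submodule.span K (X : Set A) = ⊤)
    (hYfull : Submodule.span K (Y : Set A) = ⊤) :
    -- `C` is a full `O_r(X)`-lattice in `A`
    ((∃ N : Submodule R A,
        (N : Set A) = {c : A | ∀ x ∈ X, x * c ∈ Y} ∧ N.FG ∧
          Submodule.span K {c : A | ∀ x ∈ X, x * c ∈ Y} = ⊤ ∧
          ∀ μ : A, (∀ x ∈ X, x * μ ∈ X) →
            ∀ c ∈ {c : A | ∀ x ∈ X, x * c ∈ Y}, μ * c ∈ {c : A | ∀ x ∈ X, x * c ∈ Y}) ∧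
      -- the isomorphism criterion
      ((∃ e : ↥X ≃ₗ[R] ↥Y,
          ∀ l ∈ Λ, ∀ (x : ↥X) (x' : ↥X), (x' : A) = l * (x : A) →
            (e x' : A) = l * (e x : A)) ↔
        (∃ α : Aˣ,
          {c : A | ∀ x ∈ X, x * c ∈ Y} =
              (fun μ : A => μ * (α : A)) '' {μ : A | ∀ x ∈ X, x * μ ∈ X} ∧
            Submodule.span R
                (Set.image2 (· * ·) (X : Set A) {c : A | ∀ x ∈ X, x * c ∈ Y}) = Y)) ∧
      -- furthermore, `Y = Xα`
      (∀ α : Aˣ,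
        {c : A | ∀ x ∈ X, x * c ∈ Y} =
            (fun μ : A => μ * (α : A)) '' {μ : A | ∀ x ∈ X, x * μ ∈ X} →
          Submodule.span R
              (Set.image2 (· * ·) (X : Set A) {c : A | ∀ x ∈ X, x * c ∈ Y}) = Y →
          (Y : Set A) = (fun x : A => x * (α : A)) '' (X : Set A))) := by
  have key : ∀ α : Aˣ,
        {c : A | ∀ x ∈ X, x * c ∈ Y} =
            (fun μ : A => μ * (α : A)) '' {μ : A | ∀ x ∈ X, x * μ ∈ X} →
          Submodule.span R
              (Set.image2 (· * ·) (X : Set A) {c : A | ∀ x ∈ X, x * c ∈ Y}) = Y →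
          (Y : Set A) = (fun x : A => x * (α : A)) '' (X : Set A) := by
    intro α h1 h2
    have hα : (α : A) ∈ {c : A | ∀ x ∈ X, x * c ∈ Y} := by
      rw [h1]
      exact ⟨1, fun x hx => by simpa using hx, by simp⟩
    apply Set.Subset.antisymm
    · have : Y ≤ X.map (LinearMap.mulRight R (α : A)) := by
        conv_lhs => rw [← h2]
        rw [Submodule.span_le]
        rintro _ ⟨x, hx, c, hc, rfl⟩
        rw [h1] at hc
        obtain ⟨μ, hμ, rfl⟩ := hc
        exact ⟨x * μ, hμ x hx, by simp [mul_assoc]⟩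
      intro y hy
      obtain ⟨x, hx, h⟩ := this hy
      exact ⟨x, hx, h⟩
    · rintro _ ⟨x, hx, rfl⟩
      exact hα x hx
  refine ⟨?_, ⟨?_, ?_⟩, key⟩
  · let N : Submodule R A :=
      { carrier := {c : A | ∀ x ∈ X, x * c ∈ Y}
        add_mem' := fun {a b} ha hb x hx => by
          rw [mul_add]; exact Y.add_mem (ha x hx) (hb x hx)
        zero_mem' := fun x _ => by simp
        smul_mem' := fun r a ha x hx => by
          rw [mul_smul_comm]; exact Y.smul_mem _ (ha x hx) }
    refine ⟨N, rfl, ?_, ?_, ?_⟩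
    · obtain ⟨r, hr, h1⟩ := aux_clear X hXfull (1 : A)
      have hN : ∀ c ∈ N, r • c ∈ Y := fun c hc => by
        simpa using hc _ h1
      haveI : IsNoetherian R Y := isNoetherian_of_fg_of_noetherian Y hYfg
      let f : N →ₗ[R] Y := ((LinearMap.lsmul R A r).domRestrict N).codRestrict Y
        (fun c => hN c c.2)
      have hf : Function.Injective f := by
        intro a b hab
        have h : r • (a : A) = r • (b : A) := congrArg Subtype.val hab
        exact Subtype.ext (aux_cancel (K := K) hr h)
      haveI : IsNoetherian R N := isNoetherian_of_injective f hf
      exact (Submodule.fg_top N).1 (IsNoetherian.noetherian ⊤)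
    · rw [eq_top_iff]
      intro a _
      obtain ⟨s, hs, h⟩ := aux_clear_fg Y hYfull X hXfg a
      have hk : algebraMap R K s ≠ 0 := by simpa using hs
      have : a = (algebraMap R K s)⁻¹ • (s • a) := by
        rw [← algebraMap_smul K s a, smul_smul, inv_mul_cancel₀ hk, one_smul]
      rw [this]
      refine Submodule.smul_mem _ _ (Submodule.subset_span fun x hx => ?_)
      rw [mul_smul_comm]
      exact h x hx
    · intro μ hμ c hc x hx
      rw [← mul_assoc]
      exact hc _ (hμ x hx)
  · rintro ⟨e, he⟩
    obtain ⟨α, hα⟩ := aux_iso Λ hΛfull X Y hXfull e.toLinearMap he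
    obtain ⟨β, hβ⟩ := aux_iso Λ hΛfull Y X hYfull e.symm.toLinearMap (by
      intro l hl y y' h
      have h4 := he l hl (e.symm y) ⟨l * (e.symm y : A), hXΛ l hl _ (e.symm y).2⟩ rfl
      rw [e.apply_symm_apply, ← h] at h4
      have h5 := Subtype.ext h4
      have h6 : e.symm y' = _ := (e.symm_apply_eq).2 h5.symm
      simp [h6])
    simp only [LinearEquiv.coe_coe] at hα hβ
    have h12 : α * β = 1 := by
      obtain ⟨r, hr, h1⟩ := aux_clear X hXfull (1 : A)
      have h := hβ (e ⟨_, h1⟩)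
      rw [hα, e.symm_apply_apply] at h
      apply aux_cancel (K := K) hr
      simpa using h.symm
    have h21 : β * α = 1 := by
      obtain ⟨r, hr, h1⟩ := aux_clear Y hYfull (1 : A)
      have h := hα (e.symm ⟨_, h1⟩)
      rw [hβ, e.apply_symm_apply] at h
      apply aux_cancel (K := K) hr
      simpa using h.symm
    have hXY : ∀ x ∈ X, x * α ∈ Y := fun x hx => by
      rw [← hα ⟨x, hx⟩]; exact (e _).2
    have hYX : ∀ y ∈ Y, y * β ∈ X := fun y hy => by
      rw [← hβ ⟨y, hy⟩]; exact (e.symm _).2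
    refine ⟨⟨α, β, h12, h21⟩, ?_, ?_⟩
    · ext c
      constructor
      · intro hc
        refine ⟨c * β, fun x hx => ?_, ?_⟩
        · rw [← mul_assoc]; exact hYX _ (hc x hx)
        · simp [mul_assoc, h21]
      · rintro ⟨μ, hμ, rfl⟩ x hx
        simp only [← mul_assoc]
        exact hXY _ (hμ x hx)
    · apply le_antisymm
      · rw [Submodule.span_le]
        rintro _ ⟨x, hx, c, hc, rfl⟩
        exact hc x hx
      · intro y hy
        refine Submodule.subset_span ⟨y * β, hYX y hy, α, hXY, ?_⟩
        simp [mul_assoc, h21]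
  · rintro ⟨α, h1, h2⟩
    have hY := key α h1 h2
    have hmap : X.map (LinearMap.mulRight R (α : A)) = Y := by
      apply SetLike.coe_injective
      rw [hY]
      rfl
    have hinj : Function.Injective (LinearMap.mulRight R (α : A)) := by
      intro a b h
      simpa using h
    refine ⟨(Submodule.equivMapOfInjective _ hinj X).trans (LinearEquiv.ofEq _ _ hmap), ?_⟩
    intro l hl x x' h
    simp [h, mul_assoc]
end

section
/- Two Λ-lattices X and Y are isomorphic as Λ-modules if and only if: (a) X and Y are locally isomorphic, i.e. for every maximal ideal 𝔭 of R the Λ_𝔭-lattices X_𝔭 and Y_𝔭 are isomorphic, and (b) the End_Λ(Y)-module Hom_Λ(X, Y) is free of rank 1. Furthermore, when this is the case, every free generator of Hom_Λ(X, Y) over End_Λ(Y) is an isomorphism X → Y. -/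
theorem free_gen_bijective {Λ X Y : Type*} [Ring Λ] [AddCommGroup X] [AddCommGroup Y]
    [Module Λ X] [Module Λ Y] (f : X ≃ₗ[Λ] Y) (g : X →ₗ[Λ] Y)
    (hg : Function.Bijective (fun e : Module.End Λ Y => e ∘ₗ g)) : Function.Bijective g := by
  obtain ⟨e, he⟩ := hg.2 f.toLinearMap
  have he' : ∀ x, e (g x) = f x := fun x => LinearMap.congr_fun he x
  have h2 : (g ∘ₗ f.symm.toLinearMap) ∘ₗ e = LinearMap.id := by
    apply hg.1
    ext x
    simp [he']
  constructor
  · intro a b hab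
    apply f.injective
    rw [← he', ← he', hab]
  · intro y
    refine ⟨f.symm (e y), ?_⟩
    exact LinearMap.congr_fun h2 y

theorem mk_one_inj {R Y : Type*} [CommRing R] [IsDomain R] [AddCommGroup Y] [Module R Y]
    [NoZeroSMulDivisors R Y] (p : Ideal R) [p.IsPrime] {a b : Y} {s : p.primeCompl}
    (h : LocalizedModule.mk a s = LocalizedModule.mk b s) : a = b := by
  obtain ⟨u, hu⟩ := LocalizedModule.mk_eq.1 h
  have ne : ∀ u : p.primeCompl, (u : R) ≠ 0 := fun u h0 => u.2 (by rw [h0]; exact p.zero_mem)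
  have h1 : ∀ (u : p.primeCompl) (c d : Y), u • c = u • d → c = d := by
    intro u c d hcd
    have : (u : R) • (c - d) = 0 := by
      rw [smul_sub, sub_eq_zero]; exact hcd
    rcases eq_zero_or_eq_zero_of_smul_eq_zero this with h | h
    · exact absurd h (ne u)
    · exact sub_eq_zero.1 h
  exact h1 _ _ _ (h1 _ _ _ hu)

theorem local_step {R Λ X Y : Type*} [CommRing R] [IsDomain R] [IsNoetherianRing R] [Ring Λ]
    [Algebra R Λ]
    [AddCommGroup X] [Module R X] [Module Λ X] [IsScalarTower R Λ X]
    [Module.Finite R X]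
    [AddCommGroup Y] [Module R Y] [Module Λ Y] [IsScalarTower R Λ Y]
    [Module.Finite R Y] [NoZeroSMulDivisors R Y]
    (p : Ideal R) [p.IsMaximal]
    (e : LocalizedModule p.primeCompl X ≃ₗ[Localization.AtPrime p]
              LocalizedModule p.primeCompl Y)
    (he : ∀ (l : Λ) (x : X) (s : p.primeCompl) (y : Y) (t : p.primeCompl),
              e (LocalizedModule.mk x s) = LocalizedModule.mk y t →
                e (LocalizedModule.mk (l • x) s) = LocalizedModule.mk (l • y) t)
    (g : X →ₗ[Λ] Y) (hg : Function.Bijective (fun e : Module.End Λ Y => e ∘ₗ g)) :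
    Function.Bijective (LocalizedModule.map p.primeCompl (g.restrictScalars R)) := by
  have : Module.FinitePresentation R X := Module.finitePresentation_of_finite R X
  obtain ⟨f, s, hf⟩ := Module.FinitePresentation.exists_lift_of_isLocalizedModule p.primeCompl
    (LocalizedModule.mkLinearMap p.primeCompl Y)
    ((e.toLinearMap.restrictScalars R) ∘ₗ LocalizedModule.mkLinearMap p.primeCompl X)
  have hf' : ∀ x, LocalizedModule.mk (f x) 1 = s • e (LocalizedModule.mk x 1) :=
    fun x => LinearMap.congr_fun hf x
  have smk : ∀ (m : Y) (t : p.primeCompl),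
      s • LocalizedModule.mk m t = LocalizedModule.mk (s • m) t :=
    fun m t => LocalizedModule.smul'_mk (s : R) m t
  have hinv : ∀ z : LocalizedModule p.primeCompl Y, ∀ y : Y,
      s • z = LocalizedModule.mk y 1 → z = LocalizedModule.mk y s := by
    intro z y h
    induction z using LocalizedModule.induction_on with
    | h m t =>
    have h' : LocalizedModule.mk (s • m) t = LocalizedModule.mk y 1 := (smk m t).symm.trans h
    obtain ⟨u, hu⟩ := LocalizedModule.mk_eq.1 h'
    refine LocalizedModule.mk_eq.2 ⟨u, ?_⟩
    simpa using hu
  have hes : ∀ x, e (LocalizedModule.mk x 1) = LocalizedModule.mk (f x) s :=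
    fun x => hinv _ _ (hf' x).symm
  let F : X →ₗ[Λ] Y :=
    { toFun := f
      map_add' := f.map_add
      map_smul' := by
        intro l x
        have h1 := he l x 1 _ _ (hes x)
        rw [hes] at h1
        exact mk_one_inj p h1 }
  obtain ⟨h, hh⟩ := hg.2 F
  have hh' : ∀ x, h (g x) = f x := fun x => LinearMap.congr_fun hh x
  have het : ∀ x t, LocalizedModule.mk (f x) (s * t) = e (LocalizedModule.mk x t) := by
    intro x t
    have h1 : LocalizedModule.mk x t
        = (Localization.mk 1 t : Localization.AtPrime p) • LocalizedModule.mk x 1 := by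
      rw [LocalizedModule.mk_smul_mk]; simp
    rw [h1, map_smul, hes, LocalizedModule.mk_smul_mk, one_smul, mul_comm]
  have key : ∀ z, LocalizedModule.map p.primeCompl (h.restrictScalars R)
      (LocalizedModule.map p.primeCompl (g.restrictScalars R) z) = s • e z := by
    intro z
    induction z using LocalizedModule.induction_on with
    | h x t =>
    rw [← het]
    simp only [LocalizedModule.map_mk, LinearMap.coe_restrictScalars, hh']
    rw [smk, LocalizedModule.mk_cancel_common_left]
  have sinj : ∀ z w : LocalizedModule p.primeCompl Y, s • z = s • w → z = w := by
    intro z w h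
    exact IsLocalizedModule.smul_injective (LocalizedModule.mkLinearMap p.primeCompl Y) s h
  have hsurj : Function.Surjective (LocalizedModule.map p.primeCompl (h.restrictScalars R)) := by
    intro y
    induction y using LocalizedModule.induction_on with
    | h y t =>
    refine ⟨LocalizedModule.map p.primeCompl (g.restrictScalars R)
      (e.symm (LocalizedModule.mk y (s * t))), ?_⟩
    rw [key, e.apply_symm_apply]
    rw [smk, LocalizedModule.mk_cancel_common_left]
  have hfin : Module.Finite (Localization.AtPrime p) (LocalizedModule p.primeCompl Y) :=
    Module.Finite.of_isLocalizedModule p.primeCompl (LocalizedModule.mkLinearMap p.primeCompl Y)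
  have hbij := OrzechProperty.bijective_of_surjective_endomorphism _ hsurj
  constructor
  · intro a b hab
    apply e.injective
    apply sinj
    rw [← key, ← key, hab]
  · intro y
    induction hy : LocalizedModule.map p.primeCompl (h.restrictScalars R) y
      using LocalizedModule.induction_on with
    | h m t =>
    refine ⟨e.symm (LocalizedModule.mk m (s * t)), hbij.1 ?_⟩
    rw [key, e.apply_symm_apply, hy]
    rw [smk, LocalizedModule.mk_cancel_common_left]


/-- Let `R` be a noetherian integral domain with field of fractions `K ≠ R`, `A` a
finite-dimensional `K`-algebra and `Λ` an `R`-order in `A`.  Two `Λ`-lattices `X` and `Y`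
are isomorphic as `Λ`-modules if and only if
(a) `X` and `Y` are locally isomorphic, i.e. for every maximal ideal `𝔭` of `R` the
`Λ_𝔭`-lattices `X_𝔭` and `Y_𝔭` are isomorphic (an `R_𝔭`-linear isomorphism of the
localised modules commuting with the `Λ`-action), and
(b) the `End_Λ(Y)`-module `Hom_Λ(X, Y)` is free of rank 1.
Furthermore, when this is the case, every free generator of `Hom_Λ(X, Y)` over
`End_Λ(Y)` is an isomorphism `X → Y`. -/
theorem stmt_5 {R K A : Type*}
    [CommRing R] [IsDomain R] [IsNoetherianRing R]
    [Field K] [Algebra R K] [IsFractionRing R K]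
    (hRK : ¬Function.Surjective (algebraMap R K))
    [Ring A] [Algebra K A] [FiniteDimensional K A]
    [Algebra R A] [IsScalarTower R K A]
    (Λ : Subalgebra R A)
    (hΛfg : (Subalgebra.toSubmodule Λ).FG)
    (hΛfull : Submodule.span K (Λ : Set A) = ⊤)
    (X Y : Type*)
    [AddCommGroup X] [Module R X] [Module Λ X] [IsScalarTower R Λ X]
    [Module.Finite R X] [NoZeroSMulDivisors R X]
    [AddCommGroup Y] [Module R Y] [Module Λ Y] [IsScalarTower R Λ Y]
    [Module.Finite R Y] [NoZeroSMulDivisors R Y] :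
    (Nonempty (X ≃ₗ[Λ] Y) ↔
      ((∀ (𝔭 : Ideal R) [𝔭.IsMaximal],
          ∃ e : LocalizedModule 𝔭.primeCompl X ≃ₗ[Localization.AtPrime 𝔭]
              LocalizedModule 𝔭.primeCompl Y,
            ∀ (l : Λ) (x : X) (s : 𝔭.primeCompl) (y : Y) (t : 𝔭.primeCompl),
              e (LocalizedModule.mk x s) = LocalizedModule.mk y t →
                e (LocalizedModule.mk (l • x) s) = LocalizedModule.mk (l • y) t) ∧
        (∃ g : X →ₗ[Λ] Y,
          Function.Bijective (fun e : Module.End Λ Y => e ∘ₗ g)))) ∧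
    (Nonempty (X ≃ₗ[Λ] Y) →
      ∀ g : X →ₗ[Λ] Y,
        Function.Bijective (fun e : Module.End Λ Y => e ∘ₗ g) →
          Function.Bijective g) := by
  have hback : ∀ f : X ≃ₗ[Λ] Y, Function.Bijective
      (fun e : Module.End Λ Y => e ∘ₗ f.toLinearMap) := by
    intro f
    constructor
    · intro a b hab
      ext y
      simpa using LinearMap.congr_fun hab (f.symm y)
    · intro k
      refine ⟨k ∘ₗ f.symm.toLinearMap, ?_⟩
      ext x
      simp
  refine ⟨⟨?_, ?_⟩, fun ⟨f⟩ g hg => free_gen_bijective f g hg⟩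
  · rintro ⟨f⟩
    refine ⟨?_, f.toLinearMap, hback f⟩
    intro p hp
    let φ := LocalizedModule.map p.primeCompl (f.toLinearMap.restrictScalars R)
    let ψ := LocalizedModule.map p.primeCompl (f.symm.toLinearMap.restrictScalars R)
    refine ⟨LinearEquiv.ofLinearMap φ ψ ?_ ?_, ?_⟩
    · refine LinearMap.ext fun z => ?_
      induction z using LocalizedModule.induction_on with
      | h m t => simp [φ, ψ, LocalizedModule.map_mk]
    · refine LinearMap.ext fun z => ?_
      induction z using LocalizedModule.induction_on with
      | h m t => simp [φ, ψ, LocalizedModule.map_mk]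
    · intro l x s y t h
      have h' : LocalizedModule.mk (f x) s = LocalizedModule.mk y t := by
        simpa [φ, LocalizedModule.map_mk] using h
      have goal' : LocalizedModule.mk (f (l • x)) s = LocalizedModule.mk (l • y) t := by
        obtain ⟨u, hu⟩ := LocalizedModule.mk_eq.1 h'
        refine LocalizedModule.mk_eq.2 ⟨u, ?_⟩
        have := congrArg (fun z => l • z) hu
        have sc : ∀ (v : p.primeCompl) (z : Y), l • v • z = v • l • z :=
          fun v z => smul_comm l (v : R) z
        simp only [sc] at this
        rw [map_smul]
        exact this
      simpa [φ, LocalizedModule.map_mk] using goal'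
  · rintro ⟨hloc, g, hg⟩
    have hb : Function.Bijective (g.restrictScalars R) := by
      apply bijective_of_localized_maximal
      intro p hp
      obtain ⟨e, he⟩ := hloc p
      exact local_step p e he g hg
    exact ⟨LinearEquiv.ofBijective g hb⟩
end

section
/- Let X be a full Λ-lattice in A and let h : A → A/J(A) be the canonical projection onto the quotient of A by its Jacobson radical; write ᾱ = h(α), Λ̄ = h(Λ), X̄ = h(X). Then X̄ is a full Λ̄-lattice in Ā := A/J(A). Moreover, for α ∈ X: (a) if X = Λα then X̄ = Λ̄ᾱ; (b) if X̄ = Λ̄ᾱ, then either X = Λα or X ≠ Λβ for all β ∈ X. -/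
/-- Let `R` be a noetherian integral domain with field of fractions `K ≠ R`, `A` a
finite-dimensional `K`-algebra, `Λ` an `R`-order in `A`, and `X` a full `Λ`-lattice in `A`.
Let `h : A → Ā = A/J(A)` be the canonical projection onto the quotient of `A` by its
Jacobson radical (modelled as a surjective `K`-algebra homomorphism whose kernel is the
Jacobson radical); write `ᾱ = h(α)`, `Λ̄ = h(Λ)`, `X̄ = h(X)`.
Then `X̄` is a full `Λ̄`-lattice in `Ā`.  Moreover, for `α ∈ X`:
(a) if `X = Λα` then `X̄ = Λ̄ᾱ`;
(b) if `X̄ = Λ̄ᾱ`, then either `X = Λα` or `X ≠ Λβ` for all `β ∈ X`. -/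
theorem stmt_6 {R K A B : Type*}
    [CommRing R] [IsDomain R] [IsNoetherianRing R]
    [Field K] [Algebra R K] [IsFractionRing R K]
    (hRK : ¬Function.Surjective (algebraMap R K))
    [Ring A] [Algebra K A] [FiniteDimensional K A]
    [Algebra R A] [IsScalarTower R K A]
    [Ring B] [Algebra K B] [Algebra R B] [IsScalarTower R K B]
    (h : A →ₐ[K] B) (hsurj : Function.Surjective h)
    (hker : RingHom.ker (h : A →+* B) = Ideal.jacobson (⊥ : Ideal A))
    (Λ : Subalgebra R A)
    (hΛfg : (Subalgebra.toSubmodule Λ).FG)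
    (hΛfull : Submodule.span K (Λ : Set A) = ⊤)
    (X : Submodule R A) (hXfg : X.FG)
    (hXΛ : ∀ l ∈ Λ, ∀ x ∈ X, l * x ∈ X)
    (hXfull : Submodule.span K (X : Set A) = ⊤)
    (α : A) (hα : α ∈ X) :
    -- `X̄` is a full `Λ̄`-lattice in `Ā`
    ((∃ N : Submodule R B,
        (N : Set B) = h '' (X : Set A) ∧ N.FG ∧
          Submodule.span K (h '' (X : Set A)) = ⊤ ∧
          ∀ l ∈ Λ, ∀ y ∈ h '' (X : Set A), h l * y ∈ h '' (X : Set A)) ∧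
      -- (a)
      ((X : Set A) = (fun l : A => l * α) '' (Λ : Set A) →
        h '' (X : Set A) = (fun l : B => l * h α) '' (h '' (Λ : Set A))) ∧
      -- (b)
      (h '' (X : Set A) = (fun l : B => l * h α) '' (h '' (Λ : Set A)) →
        ((X : Set A) = (fun l : A => l * α) '' (Λ : Set A) ∨
          ∀ β ∈ X, (X : Set A) ≠ (fun l : A => l * β) '' (Λ : Set A)))) := by
  have hcoe : ((X.map (h.restrictScalars R).toLinearMap : Submodule R B) : Set B)
      = h '' (X : Set A) := by
    ext y; simp
  refine ⟨⟨X.map (h.restrictScalars R).toLinearMap, hcoe, hXfg.map _, ?_, ?_⟩, ?_, ?_⟩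
  · have h1 : Submodule.span K (h.toLinearMap '' (X : Set A)) = ⊤ := by
      rw [Submodule.span_image, hXfull, Submodule.map_top]
      exact LinearMap.range_eq_top.2 hsurj
    exact h1
  · rintro l hl _ ⟨x, hx, rfl⟩
    exact ⟨l * x, hXΛ l hl x hx, map_mul h l x⟩
  · intro hX
    rw [hX, Set.image_image, Set.image_image]
    simp only [map_mul]
  · intro hbar
    by_contra hcon
    push Not at hcon
    obtain ⟨hne, β, hβ, hXβ⟩ := hcon
    apply hne
    -- `β` is invertible
    have hrange : (⊤ : Submodule K A) ≤ LinearMap.range (LinearMap.mulRight K β) := by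
      rw [← hXfull, Submodule.span_le, hXβ]
      rintro _ ⟨l, _, rfl⟩
      exact ⟨l, rfl⟩
    obtain ⟨y, hy⟩ := hrange (Submodule.mem_top : (1 : A) ∈ ⊤)
    have hy1 : y * β = 1 := hy
    haveI : IsArtinianRing A := IsArtinianRing.of_finite K A
    haveI : IsNoetherianRing A := isNoetherian_of_tower K inferInstance
    have hy2 : β * y = 1 := mul_eq_one_comm.1 hy1
    have hα2 := hα
    rw [← SetLike.mem_coe, hXβ] at hα2
    obtain ⟨l, hl, rfl⟩ := hα2
    have hβ2 : h β ∈ h '' (X : Set A) := ⟨β, hβ, rfl⟩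
    rw [hbar] at hβ2
    obtain ⟨_, ⟨m, hm, rfl⟩, hmeq⟩ := hβ2
    have hml : h (m * l) = 1 := by
      have h2 : h (m * (l * β)) * h y = h β * h y := by
        rw [map_mul h m]; exact congrArg (· * h y) hmeq
      rw [← map_mul, ← map_mul, hy2, mul_assoc, mul_assoc, hy2, mul_one, map_one] at h2
      exact h2
    have hj : m * l - 1 ∈ Ideal.jacobson (⊥ : Ideal A) := by
      rw [← hker, RingHom.mem_ker]
      simp [← map_mul, hml]
    obtain ⟨n, hn⟩ : IsNilpotent (Ideal.jacobson (⊥ : Ideal A)) :=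
      IsArtinianRing.isNilpotent_jacobson_bot
    have hjn : (m * l - 1) ^ n = 0 := by
      have := Ideal.pow_mem_pow hj n
      rw [hn] at this
      simpa using this
    have hnil : IsNilpotent ((⟨m, hm⟩ : Λ) * ⟨l, hl⟩ - 1) :=
      ⟨n, Subtype.ext (by simpa using hjn)⟩
    have hunit : IsUnit ((⟨m, hm⟩ : Λ) * ⟨l, hl⟩) := by
      simpa using hnil.isUnit_one_add
    obtain ⟨u, hu⟩ := hunit.exists_left_inv
    have hu2 : (u : A) * (m * l) = 1 := congrArg Subtype.val hu
    ext x
    constructor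
    · intro hx
      rw [hXβ] at hx
      obtain ⟨p, hp, rfl⟩ := hx
      refine ⟨p * (u * m), Λ.mul_mem hp (Λ.mul_mem u.2 hm), ?_⟩
      calc p * (u * m) * (l * β) = p * (u * (m * l)) * β := by simp only [mul_assoc]
        _ = p * β := by rw [hu2, mul_one]
    · rintro ⟨p, hp, rfl⟩
      exact hXΛ p hp _ hα
end

section
/- Let X be a left ideal of Λ. If X + 𝔣 = Λ and β ∈ M satisfies MX = Mβ, then the image β̄ of β in M/𝔣 is a unit of M/𝔣, and MX ∩ Λ = X. -/
open NumberField

/-- Let `K` be a number field with ring of integers `O`, `A` a finite-dimensional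
semisimple `K`-algebra, `Λ` an `O`-order in `A`, `M` a maximal `O`-order with
`Λ ⊆ M ⊆ A`, and `𝔣` a proper full two-sided ideal of `M` contained in `Λ`.
Let `X` be a left ideal of `Λ`.  If `X + 𝔣 = Λ` and `β ∈ M` satisfies `MX = Mβ`,
then the image `β̄` of `β` in `M/𝔣` is a unit of `M/𝔣` (i.e. `β` is invertible
modulo `𝔣` by an element of `M`), and `MX ∩ Λ = X`. -/
theorem stmt_8 {K A : Type*} [Field K] [NumberField K]
    [Ring A] [Algebra K A] [FiniteDimensional K A] [IsSemisimpleRing A]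
    [Algebra (𝓞 K) A] [IsScalarTower (𝓞 K) K A]
    (Λ M : Subalgebra (𝓞 K) A)
    (hΛfg : (Subalgebra.toSubmodule Λ).FG)
    (hΛfull : Submodule.span K (Λ : Set A) = ⊤)
    (hMfg : (Subalgebra.toSubmodule M).FG)
    (hMfull : Submodule.span K (M : Set A) = ⊤)
    (hΛM : Λ ≤ M)
    (hMmax : ∀ M' : Subalgebra (𝓞 K) A, (Subalgebra.toSubmodule M').FG →
      Submodule.span K (M' : Set A) = ⊤ → M ≤ M' → M' = M)
    (𝔣 : Submodule (𝓞 K) A)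
    (h𝔣Λ : 𝔣 ≤ Subalgebra.toSubmodule Λ)
    (h𝔣ideal : ∀ m ∈ M, ∀ x ∈ 𝔣, m * x ∈ 𝔣 ∧ x * m ∈ 𝔣)
    (h𝔣proper : 𝔣 ≠ Subalgebra.toSubmodule M)
    (h𝔣full : Submodule.span K (𝔣 : Set A) = ⊤)
    (X : Submodule (𝓞 K) A)
    (hXΛ : X ≤ Subalgebra.toSubmodule Λ)
    (hXideal : ∀ l ∈ Λ, ∀ x ∈ X, l * x ∈ X)
    (hX𝔣 : X ⊔ 𝔣 = Subalgebra.toSubmodule Λ)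
    (β : A) (hβ : β ∈ M)
    (hMX : Submodule.span (𝓞 K) (Set.image2 (· * ·) (M : Set A) (X : Set A)) =
      Submodule.map (LinearMap.mulRight (𝓞 K) β) (Subalgebra.toSubmodule M)) :
    (∃ γ ∈ M, β * γ - 1 ∈ 𝔣 ∧ γ * β - 1 ∈ 𝔣) ∧
      Submodule.span (𝓞 K) (Set.image2 (· * ·) (M : Set A) (X : Set A)) ⊓
          Subalgebra.toSubmodule Λ = X := by
  have hle : X ≤ Submodule.span (𝓞 K) (Set.image2 (· * ·) (M : Set A) (X : Set A)) := by
    intro x hx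
    exact Submodule.subset_span ⟨1, M.one_mem, x, hx, one_mul x⟩
  have hfX : ∀ m ∈ 𝔣, ∀ w ∈ Submodule.span (𝓞 K)
      (Set.image2 (· * ·) (M : Set A) (X : Set A)), m * w ∈ X := by
    intro m hm w hw
    induction hw using Submodule.span_induction with
    | mem w h =>
      obtain ⟨a, ha, x, hx, rfl⟩ := h
      have h1 := hXideal (m * a) (h𝔣Λ (h𝔣ideal a ha m hm).2) x hx
      simpa [mul_assoc] using h1
    | zero => simp
    | add a b _ _ ha hb => rw [mul_add]; exact X.add_mem ha hb
    | smul c a _ ha => rw [Algebra.mul_smul_comm]; exact X.smul_mem c ha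
  have hβX : β ∈ Submodule.span (𝓞 K) (Set.image2 (· * ·) (M : Set A) (X : Set A)) := by
    rw [hMX]
    exact ⟨1, M.one_mem, by simp⟩
  have h1 : (1 : A) ∈ X ⊔ 𝔣 := by
    rw [hX𝔣]; exact Λ.one_mem
  obtain ⟨x, hx, f, hf, hxf⟩ := Submodule.mem_sup.1 h1
  have hxM := hle hx
  rw [hMX] at hxM
  obtain ⟨γ, hγ, hγx⟩ := hxM
  have hγM : γ ∈ M := hγ
  have hγβ : γ * β = x := by simpa using hγx
  have hl : γ * β - 1 ∈ 𝔣 := by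
    rw [hγβ, ← hxf]
    simpa using hf
  -- Noetherianity gives the other inverse
  haveI : IsNoetherian (𝓞 K) (Subalgebra.toSubmodule M) :=
    isNoetherian_of_fg_of_noetherian _ hMfg
  let F : Submodule (𝓞 K) (Subalgebra.toSubmodule M) :=
    𝔣.comap (Subalgebra.toSubmodule M).subtype
  let R : Subalgebra.toSubmodule M →ₗ[𝓞 K] Subalgebra.toSubmodule M :=
    (LinearMap.mulRight (𝓞 K) β).restrict (fun m hm => by
      simpa using M.mul_mem hm hβ)
  have hRF : F ≤ F.comap R := by
    intro m hm
    exact (h𝔣ideal β hβ _ hm).2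
  let φ := F.mapQ F R hRF
  have hsurj : Function.Surjective φ := by
    intro q
    obtain ⟨m, rfl⟩ := F.mkQ_surjective q
    refine ⟨F.mkQ ⟨m.1 * γ, M.mul_mem m.2 hγM⟩, ?_⟩
    refine (Submodule.Quotient.eq F).2 ?_
    change (m.1 * γ) * β - m.1 ∈ 𝔣
    have := (h𝔣ideal m.1 m.2 _ hl).1
    rwa [mul_sub, mul_one, ← mul_assoc] at this
  have hinj : Function.Injective φ :=
    IsNoetherian.injective_of_surjective_endomorphism φ hsurj
  have hcancel : ∀ m ∈ M, m * β ∈ 𝔣 → m ∈ 𝔣 := by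
    intro m hm hmβ
    have h0 : F.mkQ ⟨m, hm⟩ = 0 := by
      apply hinj
      rw [map_zero]
      refine (Submodule.Quotient.mk_eq_zero F).2 ?_
      exact hmβ
    exact (Submodule.Quotient.mk_eq_zero F).1 h0
  refine ⟨⟨γ, hγM, ?_, hl⟩, ?_⟩
  · apply hcancel _ (M.sub_mem (M.mul_mem hβ hγM) M.one_mem)
    have := (h𝔣ideal β hβ _ hl).1
    rwa [mul_sub, mul_one, ← mul_assoc, ← one_mul β, ← mul_assoc, ← sub_mul, one_mul,
      mul_one] at this
  · apply le_antisymm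
    · rintro z ⟨hz, hzΛ⟩
      have hzx : z * x ∈ X := hXideal z hzΛ x hx
      have hzf : z * f ∈ 𝔣 := (h𝔣ideal z (hΛM hzΛ) f hf).1
      have e : z = z * x + z * f := by rw [← mul_add, hxf, mul_one]
      have hzf2 : z * f ∈ Submodule.span (𝓞 K)
          (Set.image2 (· * ·) (M : Set A) (X : Set A)) := by
        have : z * f = z - z * x := by rw [eq_sub_iff_add_eq, add_comm]; exact e.symm
        rw [this]
        exact Submodule.sub_mem _ hz (hle hzx)
      rw [hMX] at hzf2
      obtain ⟨m, hm, hmz⟩ := hzf2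
      have hmz2 : m * β = z * f := by simpa using hmz
      have hmf : m ∈ 𝔣 := hcancel m hm (by rw [hmz2]; exact hzf)
      rw [e]
      refine X.add_mem hzx ?_
      rw [← hmz2]
      exact hfX m hmf β hβX
    · exact le_inf hle hXΛ
end

section
/- Let A = ∏_{i=1}^r Mat_{n_i}(K_i) with K_i finite field extensions of a number field K, let M be a maximal O_K-order in A, and let O_C = M ∩ C = ∏ O_{K_i} where C is the centre of A. Then the reduced norm (componentwise determinant) nr : M^× → O_C^× is surjective. -/
open NumberField

set_option synthInstance.maxHeartbeats 1000000
set_option maxHeartbeats 1000000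

theorem aux_w {O F ι : Type*} [CommRing O] [IsDedekindDomain O] [Field F] [Algebra O F]
    [IsFractionRing O F] (j : ι) (L : Submodule O (ι → F)) (hL : L.FG)
    (h0 : ∃ l ∈ L, l j ≠ 0) : ∃ w : ι → F, w j = 1 ∧ ∀ l ∈ L, l j • w ∈ L := by
  classical
  let p : (ι → F) →ₗ[O] F := LinearMap.proj j
  let I : FractionalIdeal (nonZeroDivisors O) F :=
    ⟨L.map p, FractionalIdeal.isFractional_of_fg (hL.map p)⟩
  have hIm : ∀ x, x ∈ I ↔ ∃ l ∈ L, l j = x := fun x => Submodule.mem_map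
  have hI : I ≠ 0 := by
    obtain ⟨l, hl, hlj⟩ := h0
    intro h
    have : l j ∈ I := (hIm _).2 ⟨l, hl, rfl⟩
    rw [h, FractionalIdeal.mem_zero_iff] at this
    exact hlj this
  have h1 : (1 : F) ∈ I * I⁻¹ := by
    rw [mul_inv_cancel₀ hI]; exact FractionalIdeal.one_mem_one _
  have key : ∀ r ∈ I * I⁻¹, ∃ w : ι → F, w j = r ∧ ∀ l ∈ L, l j • w ∈ L := by
    intro r hr
    refine FractionalIdeal.mul_induction_on hr ?_ ?_
    · intro a ha b hb
      obtain ⟨l', hl', rfl⟩ := (hIm a).1 ha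
      refine ⟨b • l', by simp [mul_comm], fun l hl => ?_⟩
      have : l j * b ∈ I * I⁻¹ :=
        FractionalIdeal.mul_mem_mul ((hIm _).2 ⟨l, hl, rfl⟩) hb
      rw [mul_inv_cancel₀ hI, FractionalIdeal.mem_one_iff] at this
      obtain ⟨o, ho⟩ := this
      rw [smul_smul, ← ho, algebraMap_smul]
      exact L.smul_mem o hl'
    · rintro x y ⟨w, hw, hw'⟩ ⟨z, hz, hz'⟩
      refine ⟨w + z, by simp [hw, hz], fun l hl => ?_⟩
      rw [smul_add]
      exact L.add_mem (hw' l hl) (hz' l hl)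
  exact key 1 h1

/-- The transvection-like matrix `1 + (c - 1) w e_j^T`. -/
noncomputable def auxMat {F ι : Type*} [Field F] [DecidableEq ι] (j : ι) (w : ι → F) (c : F) :
    Matrix ι ι F := 1 + Matrix.vecMulVec ((c - 1) • w) (Pi.single j 1)

theorem auxMat_mulVec {F ι : Type*} [Field F] [Fintype ι] [DecidableEq ι] (j : ι) (w : ι → F)
    (c : F) (l : ι → F) : (auxMat j w c).mulVec l = l + (c - 1) • (l j • w) := by
  ext a
  rw [auxMat, Matrix.add_mulVec, Matrix.vecMulVec_mulVec]
  simp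
  ring

theorem auxMat_det {F ι : Type*} [Field F] [Fintype ι] [DecidableEq ι] (j : ι) (w : ι → F)
    (c : F) (hw : w j = 1) : (auxMat j w c).det = c := by
  rw [auxMat, Matrix.vecMulVec_eq Unit, Matrix.det_one_add_replicateCol_mul_replicateRow]
  simp [hw]

theorem auxMat_mul {F ι : Type*} [Field F] [Fintype ι] [DecidableEq ι] (j : ι) (w : ι → F)
    (c d : F) (hw : w j = 1) (h : c * d = 1) : auxMat j w c * auxMat j w d = 1 := by
  apply Matrix.mulVec_injective
  funext l
  rw [← Matrix.mulVec_mulVec, auxMat_mulVec, auxMat_mulVec, Matrix.one_mulVec]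
  ext a
  simp [hw]
  linear_combination (l j * w a) * h

theorem aux_main {R K : Type*} [CommRing R] [IsDedekindDomain R] [Field K] [CharZero K]
    [Algebra R K] [IsFractionRing R K] {r : ℕ} (n : Fin r → ℕ) (hn : ∀ i, 0 < n i)
    (Kf : Fin r → Type*) [∀ i, Field (Kf i)] [∀ i, Algebra K (Kf i)]
    [∀ i, FiniteDimensional K (Kf i)]
    [∀ i, Algebra R (Kf i)] [∀ i, IsScalarTower R K (Kf i)]
    (M : Subalgebra R (∀ i, Matrix (Fin (n i)) (Fin (n i)) (Kf i)))
    (hMfg : Module.Finite R M)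
    (hMfull : Submodule.span K (M : Set (∀ i, Matrix (Fin (n i)) (Fin (n i)) (Kf i))) = ⊤)
    (hMmax : ∀ M' : Subalgebra R (∀ i, Matrix (Fin (n i)) (Fin (n i)) (Kf i)),
      Module.Finite R M' →
      Submodule.span K (M' : Set (∀ i, Matrix (Fin (n i)) (Fin (n i)) (Kf i))) = ⊤ →
      M ≤ M' → M' = M) :
    ∀ c : ∀ i, Kf i,
      (fun i => Matrix.scalar (Fin (n i)) (c i)) ∈ M →
      (∃ c' : ∀ i, Kf i, (fun i => Matrix.scalar (Fin (n i)) (c' i)) ∈ M ∧ c * c' = 1) →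
      ∃ v : (∀ i, Matrix (Fin (n i)) (Fin (n i)) (Kf i))ˣ,
        (v : ∀ i, Matrix (Fin (n i)) (Fin (n i)) (Kf i)) ∈ M ∧
        ((v⁻¹ : (∀ i, Matrix (Fin (n i)) (Fin (n i)) (Kf i))ˣ) :
          ∀ i, Matrix (Fin (n i)) (Fin (n i)) (Kf i)) ∈ M ∧
        (fun i => ((v : ∀ i, Matrix (Fin (n i)) (Fin (n i)) (Kf i)) i).det) = c := by
  classical
  intro c hc ⟨c', hc', hcc'⟩
  let j : ∀ i, Fin (n i) := fun i => ⟨0, hn i⟩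
  have hded : ∀ i, IsDedekindDomain (integralClosure R (Kf i)) := fun i =>
    integralClosure.isDedekindDomain R K (Kf i)
  have hfrac : ∀ i, IsFractionRing (integralClosure R (Kf i)) (Kf i) := fun i =>
    integralClosure.isFractionRing_of_finite_extension K (Kf i)
  have hfin : ∀ i, Module.Finite R (integralClosure R (Kf i)) := fun i =>
    IsIntegralClosure.finite R K (Kf i) (integralClosure R (Kf i))
  -- evaluation map
  let f : ∀ i, (∀ i, Matrix (Fin (n i)) (Fin (n i)) (Kf i)) →ₗ[R] (Fin (n i) → Kf i) := fun i =>
    { toFun := fun x => (x i).mulVec (Pi.single (j i) 1)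
      map_add' := fun x y => Matrix.add_mulVec _ _ _
      map_smul' := fun a x => Matrix.smul_mulVec a (x i) _ }
  let fK : ∀ i, (∀ i, Matrix (Fin (n i)) (Fin (n i)) (Kf i)) →ₗ[K] (Fin (n i) → Kf i) := fun i =>
    { toFun := fun x => (x i).mulVec (Pi.single (j i) 1)
      map_add' := fun x y => Matrix.add_mulVec _ _ _
      map_smul' := fun a x => Matrix.smul_mulVec a (x i) _ }
  let L : ∀ i, Submodule (integralClosure R (Kf i)) (Fin (n i) → Kf i) := fun i =>
    Submodule.span _ (f i '' (M : Set (∀ i, Matrix (Fin (n i)) (Fin (n i)) (Kf i))))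
  have hLfg : ∀ i, (L i).FG := by
    intro i
    obtain ⟨s, hs⟩ := (Module.Finite.iff_fg (N := Subalgebra.toSubmodule M)).1 hMfg
    refine ⟨s.image (f i), ?_⟩
    have h1 : (f i '' (M : Set (∀ i, Matrix (Fin (n i)) (Fin (n i)) (Kf i))))
        = (Submodule.span R (f i '' (s : Set _)) : Set _) := by
      rw [← Submodule.map_span, hs]; rfl
    simp only [L]
    rw [h1, Submodule.span_span_of_tower, Finset.coe_image]
  have hMn : ∀ x ∈ M, ∀ i, ∀ l ∈ L i, (x i).mulVec l ∈ L i := by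
    intro x hx i l hl
    induction hl using Submodule.span_induction with
    | mem l hl =>
      obtain ⟨y, hy, rfl⟩ := hl
      refine Submodule.subset_span ⟨x * y, M.mul_mem hx hy, ?_⟩
      exact (Matrix.mulVec_mulVec (Pi.single (j i) 1) (x i) (y i)).symm
    | zero => simp
    | add a b _ _ ha hb => rw [Matrix.mulVec_add]; exact (L i).add_mem ha hb
    | smul a b _ hb => rw [Matrix.mulVec_smul]; exact (L i).smul_mem a hb
  -- the lattice spans
  have hLspan : ∀ i, ∀ v : Fin (n i) → Kf i, v ∈ Submodule.span K (L i : Set (Fin (n i) → Kf i)) := by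
    intro i v
    let x : ∀ i, Matrix (Fin (n i)) (Fin (n i)) (Kf i) :=
      Pi.single i (Matrix.vecMulVec v (Pi.single (j i) 1))
    have hx : fK i x = v := by
      show (x i).mulVec (Pi.single (j i) 1) = v
      simp only [x, Pi.single_eq_same, Matrix.vecMulVec_mulVec]
      simp
    have : x ∈ Submodule.span K (M : Set (∀ i, Matrix (Fin (n i)) (Fin (n i)) (Kf i))) := by
      rw [hMfull]; trivial
    have := Submodule.mem_map_of_mem (f := fK i) this
    rw [hx, Submodule.map_span] at this
    exact Submodule.span_mono Submodule.subset_span this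
  let M' : Subalgebra R (∀ i, Matrix (Fin (n i)) (Fin (n i)) (Kf i)) :=
    { carrier := {x | ∀ i, ∀ l ∈ L i, (x i).mulVec l ∈ L i}
      mul_mem' := fun {x y} hx hy i l hl => by
        rw [Pi.mul_apply, ← Matrix.mulVec_mulVec]; exact hx i _ (hy i l hl)
      add_mem' := fun {x y} hx hy i l hl => by
        rw [Pi.add_apply, Matrix.add_mulVec]; exact (L i).add_mem (hx i l hl) (hy i l hl)
      algebraMap_mem' := fun a => hMn _ (M.algebraMap_mem a) }
  have hLfin : ∀ i, Module.Finite R (L i) := fun i => by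
    have : Module.Finite (integralClosure R (Kf i)) (L i) := Module.Finite.iff_fg.2 (hLfg i)
    exact Module.Finite.trans (integralClosure R (Kf i)) (L i)
  have hM'fin : Module.Finite R M' := by
    let g : M' →ₗ[R] (∀ i, (L i →ₗ[R] L i)) :=
      { toFun := fun x i =>
          { toFun := fun l => ⟨(x.1 i).mulVec l.1, x.2 i l.1 l.2⟩
            map_add' := fun a b => Subtype.ext (by simp [Matrix.mulVec_add])
            map_smul' := fun a b => Subtype.ext (by simp [Matrix.mulVec_smul]) }
        map_add' := fun x y => by
          funext i; ext l : 1; exact Subtype.ext (by simp [Matrix.add_mulVec])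
        map_smul' := fun a x => by
          funext i; ext l : 1; exact Subtype.ext (by simp [Matrix.smul_mulVec]) }
    have hnL : ∀ i, IsNoetherian R (L i) := fun i => isNoetherian_of_isNoetherianRing_of_finite R _
    have hnH : ∀ i, IsNoetherian R (L i →ₗ[R] L i) := fun i => isNoetherian_linearMap R _ _
    have hnP : IsNoetherian R (∀ i, (L i →ₗ[R] L i)) :=
      isNoetherian_pi (R := R) (M := fun i => (L i →ₗ[R] L i))
    refine Module.Finite.of_injective g ?_
    intro x y hxy
    apply Subtype.ext
    funext i
    apply Matrix.mulVec_injective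
    funext v
    have hv := hLspan i v
    induction hv using Submodule.span_induction with
    | mem l hl =>
      have := congrArg Subtype.val (LinearMap.congr_fun (congrFun hxy i) ⟨l, hl⟩)
      exact this
    | zero => simp
    | add a b _ _ ha hb => rw [Matrix.mulVec_add, Matrix.mulVec_add, ha, hb]
    | smul a b _ hb => rw [Matrix.mulVec_smul, Matrix.mulVec_smul, hb]
  have hle : M ≤ M' := fun x hx => hMn x hx
  have hM' : M' = M := hMmax M' hM'fin
    (top_unique (hMfull ▸ Submodule.span_mono hle)) hle
  have hw : ∀ i, ∃ w : Fin (n i) → Kf i, w (j i) = 1 ∧ ∀ l ∈ L i, l (j i) • w ∈ L i := by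
    intro i
    refine aux_w (j i) (L i) (hLfg i) ⟨f i 1, Submodule.subset_span ⟨1, M.one_mem, rfl⟩, ?_⟩
    simp [f]
  choose w hw1 hw2 using hw
  have hmem : ∀ d : ∀ i, Kf i, (fun i => Matrix.scalar (Fin (n i)) (d i)) ∈ M →
      (fun i => auxMat (j i) (w i) (d i)) ∈ M := by
    intro d hd
    rw [← hM']
    intro i l hl
    have h2 := hw2 i l hl
    have h3 := hMn _ hd i _ h2
    have h4 : (Matrix.scalar (Fin (n i)) (d i)).mulVec (l (j i) • w i) = d i • (l (j i) • w i) := by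
      ext a; simp [Matrix.scalar_apply, Matrix.mulVec_diagonal]
    rw [h4] at h3
    show (auxMat (j i) (w i) (d i)).mulVec l ∈ L i
    rw [auxMat_mulVec, sub_smul, one_smul]
    exact (L i).add_mem hl ((L i).sub_mem h3 h2)
  refine ⟨⟨fun i => auxMat (j i) (w i) (c i), fun i => auxMat (j i) (w i) (c' i), ?_, ?_⟩,
    hmem c hc, hmem c' hc', ?_⟩
  · funext i
    exact auxMat_mul _ _ _ _ (hw1 i) (congrFun hcc' i)
  · funext i
    exact auxMat_mul _ _ _ _ (hw1 i) ((mul_comm _ _).trans (congrFun hcc' i))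
  · funext i
    exact auxMat_det _ _ _ (hw1 i)

theorem aux_main' {R K : Type*} [CommRing R] [IsDedekindDomain R] [Field K] [CharZero K]
    [Algebra R K] [IsFractionRing R K] {r : ℕ} (n : Fin r → ℕ) (hn : ∀ i, 0 < n i)
    (Kf : Fin r → Type*) [∀ i, Field (Kf i)] [∀ i, Algebra K (Kf i)]
    [∀ i, FiniteDimensional K (Kf i)]
    [∀ i, Algebra R (Kf i)] [∀ i, IsScalarTower R K (Kf i)]
    (alg : Algebra R (∀ i, Matrix (Fin (n i)) (Fin (n i)) (Kf i)))
    (halg : alg = Pi.algebra _ _)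
    (M : Subalgebra R (∀ i, Matrix (Fin (n i)) (Fin (n i)) (Kf i)))
    (hMfg : Module.Finite R M)
    (hMfull : Submodule.span K (M : Set (∀ i, Matrix (Fin (n i)) (Fin (n i)) (Kf i))) = ⊤)
    (hMmax : ∀ M' : Subalgebra R (∀ i, Matrix (Fin (n i)) (Fin (n i)) (Kf i)),
      Module.Finite R M' →
      Submodule.span K (M' : Set (∀ i, Matrix (Fin (n i)) (Fin (n i)) (Kf i))) = ⊤ →
      M ≤ M' → M' = M) :
    ∀ c : ∀ i, Kf i,
      (fun i => Matrix.scalar (Fin (n i)) (c i)) ∈ M →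
      (∃ c' : ∀ i, Kf i, (fun i => Matrix.scalar (Fin (n i)) (c' i)) ∈ M ∧ c * c' = 1) →
      ∃ v : (∀ i, Matrix (Fin (n i)) (Fin (n i)) (Kf i))ˣ,
        (v : ∀ i, Matrix (Fin (n i)) (Fin (n i)) (Kf i)) ∈ M ∧
        ((v⁻¹ : (∀ i, Matrix (Fin (n i)) (Fin (n i)) (Kf i))ˣ) :
          ∀ i, Matrix (Fin (n i)) (Fin (n i)) (Kf i)) ∈ M ∧
        (fun i => ((v : ∀ i, Matrix (Fin (n i)) (Fin (n i)) (Kf i)) i).det) = c := by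
  subst halg
  exact aux_main n hn Kf M hMfg hMfull hMmax

/-- Let `K` be a number field, `A = ∏_{i=1}^r Mat_{n_i}(K_i)` with the `K_i` finite field
extensions of `K`, let `M` be a maximal `O_K`-order in `A`, and let `O_C = M ∩ C` where the
centre `C = ∏ K_i` embeds in `A` diagonally via scalar matrices.  Then the reduced norm
(the componentwise determinant) `nr : M^× → O_C^×` is surjective: every element `c` of `C`
lying in `M` and invertible in `O_C` is the reduced norm of a unit of `M`. -/
theorem stmt_11 {K : Type*} [Field K] [NumberField K]
    {r : ℕ} (hr : 0 < r) (n : Fin r → ℕ) (hn : ∀ i, 0 < n i)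
    (Kf : Fin r → Type*) [∀ i, Field (Kf i)] [∀ i, Algebra K (Kf i)]
    [∀ i, FiniteDimensional K (Kf i)]
    [∀ i, Algebra (𝓞 K) (Kf i)] [∀ i, IsScalarTower (𝓞 K) K (Kf i)]
    (M : Subalgebra (𝓞 K) (∀ i, Matrix (Fin (n i)) (Fin (n i)) (Kf i)))
    (hMfg : Module.Finite (𝓞 K) M)
    (hMfull : Submodule.span K (M : Set (∀ i, Matrix (Fin (n i)) (Fin (n i)) (Kf i))) = ⊤)
    (hMmax : ∀ M' : Subalgebra (𝓞 K) (∀ i, Matrix (Fin (n i)) (Fin (n i)) (Kf i)),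
      Module.Finite (𝓞 K) M' →
      Submodule.span K (M' : Set (∀ i, Matrix (Fin (n i)) (Fin (n i)) (Kf i))) = ⊤ →
      M ≤ M' → M' = M) :
    ∀ c : ∀ i, Kf i,
      (fun i => Matrix.scalar (Fin (n i)) (c i)) ∈ M →
      (∃ c' : ∀ i, Kf i, (fun i => Matrix.scalar (Fin (n i)) (c' i)) ∈ M ∧ c * c' = 1) →
      ∃ v : (∀ i, Matrix (Fin (n i)) (Fin (n i)) (Kf i))ˣ,
        (v : ∀ i, Matrix (Fin (n i)) (Fin (n i)) (Kf i)) ∈ M ∧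
        ((v⁻¹ : (∀ i, Matrix (Fin (n i)) (Fin (n i)) (Kf i))ˣ) :
          ∀ i, Matrix (Fin (n i)) (Fin (n i)) (Kf i)) ∈ M ∧
        (fun i => ((v : ∀ i, Matrix (Fin (n i)) (Fin (n i)) (Kf i)) i).det) = c := by
  refine aux_main' (R := 𝓞 K) (K := K) n hn Kf _ ?_ M hMfg hMfull hMmax
  apply Algebra.algebra_ext
  intro a
  funext i
  have h1 : algebraMap (𝓞 K) (Kf i) a = algebraMap K (Kf i) (algebraMap (𝓞 K) K a) :=
    IsScalarTower.algebraMap_apply (𝓞 K) K (Kf i) a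
  show Matrix.scalar (Fin (n i)) (algebraMap K (Kf i) (algebraMap (𝓞 K) K a))
    = Matrix.scalar (Fin (n i)) (algebraMap (𝓞 K) (Kf i) a)
  rw [h1]
end

section
/- Let A = ∏_{i=1}^r Mat_{n_i}(K_i) with K_i finite field extensions of a number field K, let M be a maximal O_K-order in A with O_C = M ∩ C, and let 𝔤 be a proper full ideal of O_C. Then the canonical map f₁ : SL(M) → SL(M/𝔤M) is surjective, where SL(M) is the kernel of the reduced norm nr : M^× → O_C^× and SL(M/𝔤M) is the kernel of the induced map n̄r : (M/𝔤M)^× → (O_C/𝔤)^×. -/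
open NumberField

open NumberField

namespace SLLift
open Matrix

lemma stable_range {T : Type*} [CommRing T] [Finite (MaximalSpectrum T)] (a b x y : T)
    (h : x * a + y * b = 1) : ∃ t, IsUnit (a + t * b) := by
  classical
  obtain ⟨t, ht⟩ := Ideal.exists_forall_sub_mem_ideal
    (I := fun m : MaximalSpectrum T => m.asIdeal)
    (by
      intro m m' hne
      have h1 := m.isMaximal
      have h2 := m'.isMaximal
      exact Ideal.isCoprime_of_isMaximal (fun h => hne (MaximalSpectrum.ext h)))
    (fun m => if a ∈ m.asIdeal then 1 else 0)
  refine ⟨t, ?_⟩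
  by_contra hu
  obtain ⟨m, hm, hmem⟩ := exists_max_ideal_of_mem_nonunits hu
  have h1 := ht ⟨m, hm⟩
  simp only at h1
  have hone : (1 : T) ∉ m := (Ideal.ne_top_iff_one m).1 hm.ne_top
  split_ifs at h1 with ha
  · have hb : b ∈ m := by
      have e : b = (a + t * b) - a - (t - 1) * b := by ring
      rw [e]
      exact m.sub_mem (m.sub_mem hmem ha) (m.mul_mem_right _ h1)
    exact hone (h ▸ m.add_mem (m.mul_mem_left _ ha) (m.mul_mem_left _ hb))
  · apply ha
    have e : a = (a + t * b) - (t - 0) * b := by ring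
    rw [e]
    exact m.sub_mem hmem (m.mul_mem_right _ h1)

section
variable {T : Type*} [CommRing T] {n : Type*} [Fintype n] [DecidableEq n]

/-- The monoid generated by transvections. -/
def Gam (T : Type*) [CommRing T] (n : Type*) [Fintype n] [DecidableEq n] :
    Submonoid (Matrix n n T) :=
  Submonoid.closure {X | ∃ i j c, i ≠ j ∧ X = transvection i j c}

lemma transvection_mem {i j : n} (h : i ≠ j) (c : T) : transvection i j c ∈ Gam T n :=
  Submonoid.subset_closure ⟨i, j, c, h, rfl⟩

lemma Gam_det {X : Matrix n n T} (h : X ∈ Gam T n) : X.det = 1 := by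
  induction h using Submonoid.closure_induction with
  | mem x hx =>
    obtain ⟨i, j, c, hij, rfl⟩ := hx
    exact det_transvection_of_ne i j hij c
  | one => simp
  | mul x y _ _ hx hy => simp [hx, hy]

lemma Gam_inv {X : Matrix n n T} (h : X ∈ Gam T n) : ∃ Y ∈ Gam T n, Y * X = 1 := by
  induction h using Submonoid.closure_induction with
  | mem x hx =>
    obtain ⟨i, j, c, hij, rfl⟩ := hx
    exact ⟨_, transvection_mem hij (-c), by
      rw [transvection_mul_transvection_same i j hij]; simp⟩
  | one => exact ⟨1, one_mem _, by simp⟩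
  | mul x y _ _ hx hy =>
    obtain ⟨x', h1, h2⟩ := hx
    obtain ⟨y', h3, h4⟩ := hy
    refine ⟨y' * x', mul_mem h3 h1, ?_⟩
    rw [mul_assoc, ← mul_assoc x', h2, one_mul, h4]

lemma Gam_of_mul {X A : Matrix n n T} (h : X ∈ Gam T n) (hA : X * A ∈ Gam T n) :
    A ∈ Gam T n := by
  obtain ⟨Y, h1, h2⟩ := Gam_inv h
  have := mul_mem h1 hA
  rwa [← mul_assoc, h2, one_mul] at this

lemma rowop_mem (j : n) (b : n → T) (s : Finset n) (hj : j ∉ s) :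
    (1 + ∑ i ∈ s, single j i (b i)) ∈ Gam T n := by
  induction s using Finset.induction with
  | empty => simp [one_mem]
  | insert k s hk ih =>
    have hjk : j ≠ k := fun h => hj (by simp [h])
    have hjs : j ∉ s := fun h => hj (by simp [h])
    have := mul_mem (ih hjs) (transvection_mem hjk (b k))
    convert this using 1
    rw [Finset.sum_insert hk, transvection, mul_add, mul_one, add_mul, one_mul, Finset.sum_mul]
    rw [Finset.sum_eq_zero (s := s) (f := fun i => single j i (b i) * single j k (b k))]
    · simp; abel
    · intro i hi
      rw [single_mul_single_of_ne]
      rintro rfl; exact hjs hi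

lemma colop_mem (j : n) (b : n → T) (s : Finset n) (hj : j ∉ s) :
    (1 + ∑ i ∈ s, single i j (b i)) ∈ Gam T n := by
  induction s using Finset.induction with
  | empty => simp [one_mem]
  | insert k s hk ih =>
    have hjk : k ≠ j := fun h => hj (by simp [h])
    have hjs : j ∉ s := fun h => hj (by simp [h])
    have := mul_mem (ih hjs) (transvection_mem hjk (b k))
    convert this using 1
    rw [Finset.sum_insert hk, transvection, mul_add, mul_one, add_mul, one_mul, Finset.sum_mul]
    rw [Finset.sum_eq_zero (s := s) (f := fun i => single i j (b i) * single k j (b k))]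
    · simp; abel
    · intro i hi
      rw [single_mul_single_of_ne]
      exact hjk.symm

lemma rowop_apply (j : n) (b : n → T) (s : Finset n) (A : Matrix n n T) (i l : n) :
    ((1 + ∑ k ∈ s, single j k (b k)) * A) i l =
      A i l + if i = j then ∑ k ∈ s, b k * A k l else 0 := by
  rw [add_mul, one_mul, Matrix.add_apply, Finset.sum_mul, Matrix.sum_apply]
  congr 1
  split_ifs with h
  · subst h
    simp
  · apply Finset.sum_eq_zero
    intro k _
    exact single_mul_apply_of_ne _ _ _ _ _ h _

lemma colop_apply (j : n) (b : n → T) (s : Finset n) (A : Matrix n n T) (i l : n) :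
    ((1 + ∑ k ∈ s, single k j (b k)) * A) i l =
      A i l + if i ∈ s then b i * A j l else 0 := by
  rw [add_mul, one_mul, Matrix.add_apply, Finset.sum_mul, Matrix.sum_apply]
  congr 1
  rw [← Finset.sum_ite_eq s i (fun k => b k * A j l)]
  apply Finset.sum_congr rfl
  intro k _
  split_ifs with h
  · subst h; simp
  · exact single_mul_apply_of_ne _ _ _ _ _ h _

lemma Gam_step {t : Finset n} {j : n} (hj : j ∉ t)
    (ih : ∀ A : Matrix n n T, A.det = 1 →
      (∀ l, l ∉ t → ∀ i, A i l = (1 : Matrix n n T) i l) → A ∈ Gam T n)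
    (A : Matrix n n T) (hd : A.det = 1)
    (hA : ∀ l, l ∉ insert j t → ∀ i, A i l = (1 : Matrix n n T) i l)
    (h1 : A j j = 1) : A ∈ Gam T n := by
  have hX := colop_mem j (fun i => - A i j) (Finset.univ.erase j) (by simp)
  refine Gam_of_mul hX (ih _ (by rw [det_mul, Gam_det hX, hd, one_mul]) ?_)
  intro l hl i
  rw [colop_apply]
  by_cases hlj : l = j
  · subst hlj
    by_cases hi : i = l
    · subst hi; simp [h1]
    · simp [hi, h1]
  · have h2 := hA l (by simp [hlj, hl])
    rw [h2, h2, one_apply_ne (Ne.symm hlj)]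
    simp

theorem mem_Gam [Finite (MaximalSpectrum T)] (t : Finset n) : ∀ A : Matrix n n T, A.det = 1 →
      (∀ l, l ∉ t → ∀ i, A i l = (1 : Matrix n n T) i l) → A ∈ Gam T n := by
  induction t using Finset.induction with
  | empty =>
    intro A _ h
    have : A = 1 := by ext i l; exact h l (by simp) i
    rw [this]; exact one_mem _
  | insert j t hj ih =>
    intro A hd hA
    rcases t.eq_empty_or_nonempty with rfl | ⟨k, hk⟩
    · refine Gam_step hj ih A hd hA ?_
      have e : A = (1 : Matrix n n T).updateCol j (fun i => A i j) := by
        ext i l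
        by_cases h : l = j
        · subst h; simp
        · rw [updateCol_ne h]; exact hA l (by simp [h]) i
      have := cramer_apply (1 : Matrix n n T) (fun i => A i j) j
      rw [← e, hd, cramer_one] at this
      simpa using this
    · have hkj : k ≠ j := fun h => hj (h ▸ hk)
      set B := A.adjugate with hB
      have hBA : B * A = 1 := by rw [hB, adjugate_mul, hd, one_smul]
      have hB0 : ∀ i, i ∉ insert j t → B j i = 0 := by
        intro i hi
        have h1 : (B * A) j i = 0 := by
          rw [hBA, one_apply_ne]; rintro rfl; simp at hi
        rw [mul_apply] at h1
        simpa [hA i hi, one_apply] using h1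
      have hone : B j j * A j j + 1 * ∑ k ∈ t, B j k * A k j = 1 := by
        have h1 : (B * A) j j = 1 := by rw [hBA, one_apply_eq]
        rw [mul_apply, ← Finset.sum_subset (Finset.subset_univ (insert j t)),
          Finset.sum_insert hj] at h1
        · rw [one_mul]; exact h1
        · intro x _ hx; rw [hB0 x hx, zero_mul]
      obtain ⟨τ, hu⟩ := stable_range _ _ _ _ hone
      have hX := rowop_mem j (fun i => τ * B j i) t hj
      refine Gam_of_mul hX ?_
      set A1 := (1 + ∑ i ∈ t, single j i (τ * B j i)) * A with hA1
      have hd1 : A1.det = 1 := by rw [hA1, det_mul, Gam_det hX, hd, one_mul]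
      have hs1 : ∀ l, l ∉ insert j t → ∀ i, A1 i l = (1 : Matrix n n T) i l := by
        intro l hl i
        rw [hA1, rowop_apply, hA l hl]
        rw [Finset.sum_eq_zero]
        · simp
        · intro k hk
          rw [hA l hl, one_apply_ne, mul_zero]
          rintro rfl; exact hl (by simp [hk])
      have hu1 : IsUnit (A1 j j) := by
        rw [hA1, rowop_apply, if_pos rfl]
        convert hu using 2
        rw [Finset.mul_sum]; simp only [mul_assoc]
      obtain ⟨u, hu⟩ := hu1
      clear_value A1
      clear hA1 hX hB0 hone hBA hB hA hd
      have key : ∀ (A : Matrix n n T) (i i' : n) (c : T), i ≠ i' → i' ∈ insert j t →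
          (∀ l, l ∉ insert j t → ∀ i, A i l = (1 : Matrix n n T) i l) →
          (∀ l, l ∉ insert j t → ∀ q, (transvection i i' c * A) q l = (1 : Matrix n n T) q l) := by
        intro A i i' c hii hi' h l hl q
        by_cases hq : q = i
        · subst hq
          rw [transvection_mul_apply_same, h l hl, h l hl, one_apply_ne (i := i'), mul_zero, add_zero]
          rintro rfl; exact hl hi'
        · rw [transvection_mul_apply_of_ne _ _ _ _ hq, h l hl]
      have hX2 := transvection_mem hkj ((↑u⁻¹ : T) * (1 - A1 k j))
      have hX3 := transvection_mem hkj.symm (1 - (u : T))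
      refine Gam_of_mul hX2 (Gam_of_mul hX3 (Gam_step hj ih _ ?_ ?_ ?_))
      · rw [det_mul, det_mul, Gam_det hX2, Gam_det hX3, hd1]; simp
      · exact key _ _ _ _ hkj.symm (by simp [hk]) (key _ _ _ _ hkj (by simp) hs1)
      · rw [transvection_mul_apply_same, transvection_mul_apply_of_ne _ _ _ _ hkj.symm,
          transvection_mul_apply_same, ← hu]
        have := u.inv_mul
        linear_combination (1 - (u : T)) * (1 - A1 k j) * this

end
end SLLift

namespace SLLift
open Matrix

lemma exists_basis {O F : Type*} [CommRing O] [IsDedekindDomain O] [Field F] [Algebra O F]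
    [IsFractionRing O F] {n : ℕ} (P : Submodule O (Fin n → F)) (hfg : P.FG)
    (hspan : Submodule.span F (P : Set (Fin n → F)) = ⊤) (I : Ideal O) (hI : I ≠ ⊥)
    (hI' : I ≠ ⊤) : ∃ c : O, c - 1 ∈ I ∧ ∃ e : Module.Basis (Fin n) F (Fin n → F),
      (∀ i, e i ∈ P) ∧ ∀ p ∈ P, c • p ∈ Submodule.span O (Set.range e) := by
  classical
  let S : Submonoid O :=
    { carrier := {s | s - 1 ∈ I}
      one_mem' := by simp
      mul_mem' := by
        intro a b ha hb
        have e : a * b - 1 = (a - 1) * b + (b - 1) := by ring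
        show a * b - 1 ∈ I
        rw [e]
        exact I.add_mem (I.mul_mem_right _ ha) hb }
  have hS : ∀ s, s ∈ S ↔ s - 1 ∈ I := fun s => Iff.rfl
  have hS0 : S ≤ nonZeroDivisors O := by
    apply le_nonZeroDivisors_of_noZeroDivisors
    intro h
    rw [hS, zero_sub, I.neg_mem_iff] at h
    exact hI' ((Ideal.eq_top_iff_one I).2 h)
  let R := Localization S
  have hunit : ∀ y : S, IsUnit (algebraMap O F y) := fun y =>
    IsLocalization.map_units F (⟨y.1, hS0 y.2⟩ : nonZeroDivisors O)
  let : Algebra R F := (IsLocalization.lift (M := S) (S := R) hunit).toAlgebra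
  have : IsScalarTower O R F := IsScalarTower.of_algebraMap_eq (fun x =>
    (IsLocalization.lift_eq (M := S) (S := R) hunit x).symm)
  have : IsFractionRing R F := IsFractionRing.isFractionRing_of_isDomain_of_isLocalization S R F
  have : IsDomain R := IsLocalization.isDomain_localization hS0
  have : IsDedekindDomain R := IsLocalization.isDedekindDomain O hS0 R
  have : IsPrincipalIdealRing R := by
    apply IsPrincipalIdealRing.of_finite_maximals
    have hJ : I.map (algebraMap O R) ≠ 0 := by
      intro h
      apply hI
      rw [Submodule.zero_eq_bot, Ideal.map_eq_bot_iff_of_injective (IsLocalization.injective R hS0)] at h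
      exact h
    have hle : ∀ m : Ideal R, m.IsMaximal → I.map (algebraMap O R) ≤ m := by
      intro m hm
      rw [Ideal.map_le_iff_le_comap]
      intro i hi
      by_contra hni
      obtain ⟨y, hy⟩ := hm.exists_inv hni
      obtain ⟨z, hz, hyz⟩ := hy
      obtain ⟨b, s, rfl⟩ := IsLocalization.exists_mk'_eq S y
      have hmem : algebraMap O R (s - b * i) ∈ m := by
        have : algebraMap O R (s - b * i) = algebraMap O R s * z := by
          have h2 := IsLocalization.mk'_spec R b s
          rw [map_sub, map_mul, ← h2]
          linear_combination (-(algebraMap O R s)) * hyz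
        rw [this]; exact m.mul_mem_left _ hz
      have hs : (s : O) - b * i ∈ S := by
        rw [hS]
        have e : (s : O) - b * i - 1 = (s - 1) - b * i := by ring
        rw [e]; exact I.sub_mem s.2 (I.mul_mem_left _ hi)
      exact hm.ne_top (Ideal.eq_top_of_isUnit_mem _ hmem (IsLocalization.map_units R ⟨_, hs⟩))
    refine ((Ideal.finite_factors hJ).image (fun v => v.asIdeal)).subset ?_
    intro m hm
    have hm : m.IsMaximal := hm
    refine ⟨⟨m, hm.isPrime, ?_⟩, ?_, rfl⟩
    · rintro rfl
      exact hJ (le_bot_iff.1 (hle _ hm))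
    · exact Ideal.dvd_iff_le.2 (hle _ hm)
  obtain ⟨G, hG⟩ := hfg
  let PR : Submodule R (Fin n → F) := Submodule.span R (P : Set (Fin n → F))
  have hPR : PR = Submodule.span R (G : Set (Fin n → F)) := by
    show Submodule.span R (P : Set (Fin n → F)) = _
    rw [← hG, Submodule.span_span_of_tower]
  have : Module.Finite R PR := by
    rw [Module.Finite.iff_fg, hPR]
    exact ⟨G, rfl⟩
  have : Module.IsTorsionFree R F := inferInstance
  have : Module.Free R PR := Module.free_of_finite_type_torsion_free'
  let b := Module.Free.chooseBasis R PR
  have hli : LinearIndependent F (fun i => (b i : Fin n → F)) := by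
    rw [← LinearIndependent.iff_fractionRing R F]
    exact b.linearIndependent.map' PR.subtype (Submodule.ker_subtype _)
  have hsp : Submodule.span R (Set.range (fun i => (b i : Fin n → F))) = PR := by
    have := congrArg (Submodule.map PR.subtype) b.span_eq
    rw [Submodule.map_span, Submodule.map_top, Submodule.range_subtype, ← Set.range_comp] at this
    exact this
  have hspF : ⊤ ≤ Submodule.span F (Set.range (fun i => (b i : Fin n → F))) := by
    rw [← Submodule.span_span_of_tower R, hsp, Submodule.span_span_of_tower, hspan]
  let e0 := Module.Basis.mk hli hspF
  have hcard : Fintype.card (Module.Free.ChooseBasisIndex R PR) = n := by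
    rw [← Module.finrank_eq_card_basis e0]; simp
  let e1 := e0.reindex (Fintype.equivFinOfCardEq hcard)
  have he1 : Set.range e1 = Set.range (fun i => (b i : Fin n → F)) := by
    rw [Module.Basis.range_reindex, Module.Basis.coe_mk]
  have hmul : ∀ i, ∃ s : S, s • e1 i ∈ P := by
    intro i
    have : e1 i ∈ PR := by
      rw [← hsp, ← he1]; exact Submodule.subset_span ⟨i, rfl⟩
    obtain ⟨t, ht⟩ := multiple_mem_span_of_mem_localization_span S R (P : Set (Fin n → F)) _ this
    rw [Submodule.span_eq] at ht
    exact ⟨t, ht⟩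
  choose s hs using hmul
  let s0 : S := ∏ i, s i
  have hs0 : ∀ i, (s0 : O) • e1 i ∈ P := by
    intro i
    show ((∏ i, s i : S) : O) • e1 i ∈ P
    rw [← Finset.prod_erase_mul _ _ (Finset.mem_univ i), Submonoid.coe_mul, mul_smul]
    exact P.smul_mem _ (hs i)
  have hmul2 : ∀ g : G, ∃ t : S, t • (g : Fin n → F) ∈ Submodule.span O (Set.range e1) := by
    intro g
    have : (g : Fin n → F) ∈ Submodule.span R (Set.range e1) := by
      rw [he1, hsp, hPR]; exact Submodule.subset_span g.2
    exact multiple_mem_span_of_mem_localization_span S R _ _ this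
  choose t ht using hmul2
  let t0 : S := ∏ g, t g
  have ht0 : ∀ p ∈ P, (t0 : O) • p ∈ Submodule.span O (Set.range e1) := by
    intro p hp
    have : P ≤ (Submodule.span O (Set.range e1)).comap (LinearMap.lsmul O (Fin n → F) (t0 : O)) := by
      rw [← hG, Submodule.span_le]
      intro g hg
      show ((∏ i, t i : S) : O) • g ∈ Submodule.span O (Set.range e1)
      rw [← Finset.prod_erase_mul _ _ (Finset.mem_univ (⟨g, hg⟩ : G)), Submonoid.coe_mul, mul_smul]
      exact Submodule.smul_mem _ _ (ht ⟨g, hg⟩)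
    exact this hp
  refine ⟨(s0 * t0 : S), (s0 * t0).2, e1.isUnitSMul (w := fun _ => algebraMap O F s0) (fun _ => hunit s0), ?_, ?_⟩
  · intro i
    rw [Module.Basis.isUnitSMul_apply, algebraMap_smul]
    exact hs0 i
  · intro p hp
    rw [Submonoid.coe_mul, mul_smul]
    have : Submodule.span O (Set.range e1) ≤ (Submodule.span O (Set.range (e1.isUnitSMul (w := fun _ => algebraMap O F s0) (fun _ => hunit s0)))).comap (LinearMap.lsmul O (Fin n → F) (s0 : O)) := by
      rw [Submodule.span_le]
      rintro _ ⟨i, rfl⟩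
      apply Submodule.subset_span
      refine ⟨i, ?_⟩
      rw [Module.Basis.isUnitSMul_apply, algebraMap_smul]
      rfl
    exact this (ht0 p hp)
end SLLift
namespace SLLift
open Matrix

lemma finite_max {O : Type*} [CommRing O] [IsDedekindDomain O] (I : Ideal O) (hI : I ≠ ⊥) :
    Finite (MaximalSpectrum (O ⧸ I)) := by
  have : Ring.KrullDimLE 0 (O ⧸ I) := by
    apply Ring.KrullDimLE.mk₀
    intro J hJ
    have h1 : (J.comap (Ideal.Quotient.mk I)).IsPrime := Ideal.comap_isPrime _ _
    have hle : I ≤ J.comap (Ideal.Quotient.mk I) := by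
      intro x hx
      rw [Ideal.mem_comap, Ideal.Quotient.eq_zero_iff_mem.2 hx]
      exact J.zero_mem
    have h2 : (J.comap (Ideal.Quotient.mk I)).IsMaximal :=
      h1.isMaximal (fun h => hI (le_bot_iff.1 (h ▸ hle)))
    have h3 := Ideal.map_comap_of_surjective _ (Ideal.Quotient.mk_surjective (I := I)) J
    rcases Ideal.map_eq_top_or_isMaximal_of_surjective _
      (Ideal.Quotient.mk_surjective (I := I)) h2 with h | h
    · rw [h3] at h; exact absurd h hJ.ne_top
    · rwa [h3] at h
  have : IsArtinianRing (O ⧸ I) :=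
    isArtinianRing_iff_isNoetherianRing_krullDimLE_zero.2 ⟨inferInstance, this⟩
  infer_instance

/-- matrices stabilising `P` -/
def Stab {O F : Type*} [CommRing O] [Field F] [Algebra O F] {n : ℕ}
    (P : Submodule O (Fin n → F)) (x : Matrix (Fin n) (Fin n) F) : Prop :=
  ∀ p ∈ P, x *ᵥ p ∈ P

section
variable {O F : Type*} [CommRing O] [Field F] [Algebra O F] {n : ℕ}
    {P : Submodule O (Fin n → F)} {x y : Matrix (Fin n) (Fin n) F}

lemma Stab.one : Stab P 1 := fun p hp => by rwa [one_mulVec]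
lemma Stab.add (hx : Stab P x) (hy : Stab P y) : Stab P (x + y) := fun p hp => by
  rw [add_mulVec]; exact P.add_mem (hx p hp) (hy p hp)
lemma Stab.sub (hx : Stab P x) (hy : Stab P y) : Stab P (x - y) := fun p hp => by
  rw [sub_mulVec]; exact P.sub_mem (hx p hp) (hy p hp)
lemma Stab.mul (hx : Stab P x) (hy : Stab P y) : Stab P (x * y) := fun p hp => by
  rw [← mulVec_mulVec]; exact hx _ (hy p hp)
lemma Stab.smul (hx : Stab P x) (a : O) : Stab P (a • x) := fun p hp => by
  rw [smul_mulVec]; exact P.smul_mem _ (hx _ hp)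
end

theorem lift_single {O F : Type*} [CommRing O] [IsDedekindDomain O] [Field F] [Algebra O F]
    [IsFractionRing O F] {n : ℕ} (P : Submodule O (Fin n → F)) (hfg : P.FG)
    (hspan : Submodule.span F (P : Set (Fin n → F)) = ⊤) (I : Ideal O) (hI : I ≠ ⊥)
    (w : Matrix (Fin n) (Fin n) F) (hw : Stab P w)
    (hdet : ∃ a ∈ I, w.det - 1 = algebraMap O F a) :
    ∃ v v' : Matrix (Fin n) (Fin n) F, v * v' = 1 ∧ v' * v = 1 ∧ Stab P v ∧ Stab P v' ∧
      v.det = 1 ∧ v - w ∈ Submodule.span O {x | ∃ a ∈ I, ∃ m, Stab P m ∧ x = a • m} := by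
  classical
  by_cases hI' : I = ⊤
  · refine ⟨1, 1, by simp, by simp, Stab.one, Stab.one, by simp, Submodule.subset_span ?_⟩
    exact ⟨1, by simp [hI'], 1 - w, Stab.one.sub hw, by simp⟩
  obtain ⟨c, hc, e, heP, heS⟩ := exists_basis P hfg hspan I hI hI'
  have := finite_max I hI
  set H : Matrix (Fin n) (Fin n) F := Matrix.of (fun i j => e j i) with hH
  have hHu : IsUnit H := by
    have : H = (Pi.basisFun F (Fin n)).toMatrix e := by
      ext i j; simp [hH, Module.Basis.toMatrix_apply]
    rw [this]
    have := Module.Basis.invertibleToMatrix (Pi.basisFun F (Fin n)) e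
    exact isUnit_of_invertible _
  obtain ⟨Hu, hHu⟩ := hHu
  set Hi : Matrix (Fin n) (Fin n) F := ↑Hu⁻¹ with hHi
  have hHHi : H * Hi = 1 := by rw [← hHu]; exact Hu.mul_inv
  have hHiH : Hi * H = 1 := by rw [← hHu]; exact Hu.inv_mul
  let φ : O →+* F := algebraMap O F
  have hHy : ∀ y : Fin n → O, H *ᵥ (φ ∘ y) = ∑ j, y j • e j := by
    intro y
    ext i
    simp only [mulVec, dotProduct, hH, of_apply, Finset.sum_apply, Pi.smul_apply, Function.comp]
    refine Finset.sum_congr rfl fun j _ => ?_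
    rw [Algebra.smul_def, mul_comm]
  have f1 : ∀ y : Fin n → O, H *ᵥ (φ ∘ y) ∈ P := by
    intro y
    rw [hHy]
    exact P.sum_mem fun j _ => P.smul_mem _ (heP j)
  have f2 : ∀ p ∈ P, ∃ y : Fin n → O, c • p = H *ᵥ (φ ∘ y) := by
    intro p hp
    obtain ⟨y, hy⟩ := (Submodule.mem_span_range_iff_exists_fun O).1 (heS p hp)
    exact ⟨y, by rw [hHy, hy]⟩
  let cj : Matrix (Fin n) (Fin n) O → Matrix (Fin n) (Fin n) F := fun X => H * X.map φ * Hi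
  have cj_mul : ∀ X Y, cj (X * Y) = cj X * cj Y := by
    intro X Y
    simp only [cj, Matrix.map_mul]
    calc H * (X.map φ * Y.map φ) * Hi = H * X.map φ * 1 * Y.map φ * Hi := by
          simp only [mul_assoc, one_mul]
      _ = _ := by rw [← hHiH]; simp only [mul_assoc]
  have cj_one : cj 1 = 1 := by simp [cj, hHHi]
  have cj_add : ∀ X Y, cj (X + Y) = cj X + cj Y := by
    intro X Y
    simp only [cj, Matrix.map_add φ (map_add φ), mul_add, add_mul]
  have cj_smul : ∀ (a : O) X, cj (a • X) = a • cj X := by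
    intro a X
    have : (a • X).map φ = a • X.map φ := by
      ext i j
      show φ (a * X i j) = a • φ (X i j)
      rw [map_mul, Algebra.smul_def]
    simp only [cj, this, mul_smul_comm, smul_mul_assoc]
  have f3 : ∀ X, Stab P (c • cj X) := by
    intro X p hp
    obtain ⟨y, hy⟩ := f2 p hp
    rw [smul_mulVec, ← mulVec_smul, hy, mulVec_mulVec]
    have : cj X * H = H * X.map φ := by
      simp only [cj]; rw [mul_assoc, hHiH, mul_one]
    rw [this, ← mulVec_mulVec, ← (funext (RingHom.map_mulVec φ X y) : φ ∘ (X *ᵥ y) = X.map φ *ᵥ (φ ∘ y))]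
    exact f1 _
  have hB : ∃ B : Matrix (Fin n) (Fin n) O, c • (w * H) = H * B.map φ := by
    have : ∀ j, ∃ y : Fin n → O, c • (w *ᵥ e j) = H *ᵥ (φ ∘ y) := fun j => f2 _ (hw _ (heP j))
    choose y hy using this
    refine ⟨Matrix.of (fun i j => y j i), ?_⟩
    ext i j
    have := congrFun (hy j) i
    simpa [mulVec, dotProduct, mul_apply, hH] using this
  obtain ⟨B, hB⟩ := hB
  have hcjB : cj B = c • w := by
    simp only [cj]; rw [← hB, smul_mul_assoc, mul_assoc, hHHi, mul_one]
  have hdetB : B.det - 1 ∈ I := by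
    obtain ⟨a, ha, haw⟩ := hdet
    have h1 : φ B.det = φ (c ^ n * (1 + a)) := by
      have h2 := congrArg Matrix.det hB
      have h3 : c • (w * H) = φ c • (w * H) := by
        rw [algebraMap_smul]
      have h4 : (B.map φ).det = φ B.det := (RingHom.map_det φ B).symm
      rw [h3, det_smul, det_mul, det_mul, Fintype.card_fin, h4] at h2
      have hHd : H.det ≠ 0 := by
        intro h0
        have := congrArg Matrix.det hHHi
        rw [det_mul, h0] at this; simp at this
      have h5 : φ (c ^ n * (1 + a)) = φ c ^ n * w.det := by
        rw [map_mul, map_pow, map_add, map_one]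
        have : φ a = w.det - 1 := haw.symm
        rw [this]; ring
      rw [h5]
      apply mul_left_cancel₀ hHd
      linear_combination -h2
    have h2 : B.det = c ^ n * (1 + a) := IsFractionRing.injective O F h1
    rw [h2, ← Ideal.Quotient.mk_eq_mk_iff_sub_mem]
    have hc1 : Ideal.Quotient.mk I c = 1 := by
      rw [← map_one (Ideal.Quotient.mk I), Ideal.Quotient.mk_eq_mk_iff_sub_mem]; exact hc
    rw [map_mul, map_pow, map_add, hc1, Ideal.Quotient.eq_zero_iff_mem.2 ha]
    simp
  have hc1 : Ideal.Quotient.mk I c = 1 := by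
    rw [← map_one (Ideal.Quotient.mk I), Ideal.Quotient.mk_eq_mk_iff_sub_mem]; exact hc
  have hBG : B.map (Ideal.Quotient.mk I) ∈ Gam (O ⧸ I) (Fin n) := by
    refine mem_Gam Finset.univ _ ?_ (fun l hl => absurd (Finset.mem_univ l) hl)
    have h4 := (RingHom.map_det (Ideal.Quotient.mk I) B).symm
    refine Eq.trans h4 ?_
    rw [← map_one (Ideal.Quotient.mk I), Ideal.Quotient.mk_eq_mk_iff_sub_mem]; exact hdetB
  have hlift : ∀ X ∈ Gam (O ⧸ I) (Fin n), ∃ V V' : Matrix (Fin n) (Fin n) O,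
      V * V' = 1 ∧ V' * V = 1 ∧ V.map (Ideal.Quotient.mk I) = X ∧ V.det = 1 ∧
      Stab P (cj V) ∧ Stab P (cj V') := by
    intro X hX
    induction hX using Submonoid.closure_induction with
    | mem X hX =>
      obtain ⟨i, j, a', hij, rfl⟩ := hX
      obtain ⟨a, rfl⟩ := Ideal.Quotient.mk_surjective a'
      have hst : ∀ a : O, Stab P (cj (transvection i j (c * a))) := by
        intro a
        have e1 : transvection i j (c * a) = 1 + c • single i j a := by
          rw [transvection, smul_single, smul_eq_mul]
        rw [e1, cj_add, cj_one, cj_smul]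
        exact Stab.one.add (f3 _)
      refine ⟨transvection i j (c * a), transvection i j (c * (-a)), ?_, ?_, ?_, ?_, hst _, hst _⟩
      · rw [transvection_mul_transvection_same i j hij]; simp
      · rw [transvection_mul_transvection_same i j hij]; simp
      · rw [transvection, transvection, Matrix.map_add _ (map_add _), Matrix.map_one _ (map_zero _) (map_one _),
          Matrix.map_single, map_mul, hc1, one_mul]
      · exact det_transvection_of_ne i j hij _
    | one => exact ⟨1, 1, by simp, by simp, by simp, by simp, by rw [cj_one]; exact Stab.one,
        by rw [cj_one]; exact Stab.one⟩
    | mul X Y _ _ hX hY =>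
      obtain ⟨V, V', h1, h2, h3, h4, h5, h6⟩ := hX
      obtain ⟨W, W', k1, k2, k3, k4, k5, k6⟩ := hY
      refine ⟨V * W, W' * V', ?_, ?_, ?_, ?_, ?_, ?_⟩
      · rw [mul_assoc, ← mul_assoc W, k1, one_mul, h1]
      · rw [mul_assoc, ← mul_assoc V', h2, one_mul, k2]
      · rw [Matrix.map_mul, h3, k3]
      · rw [det_mul, h4, k4, one_mul]
      · rw [cj_mul]; exact h5.mul k5
      · rw [cj_mul]; exact k6.mul h6
  obtain ⟨V, V', h1, h2, h3, h4, h5, h6⟩ := hlift _ hBG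
  refine ⟨cj V, cj V', ?_, ?_, h5, h6, ?_, ?_⟩
  · rw [← cj_mul, h1, cj_one]
  · rw [← cj_mul, h2, cj_one]
  · have h7 : (V.map φ).det = φ V.det := (RingHom.map_det φ V).symm
    have h8 := congrArg Matrix.det hHHi
    rw [det_mul, det_one] at h8
    simp only [cj]
    rw [det_mul, det_mul, h7, h4, map_one, mul_one, h8]
  · have hVB : V = B + (V - B) := by abel
    have hg : ∀ i j, (V - B) i j ∈ I := by
      intro i j
      rw [Matrix.sub_apply, ← Ideal.Quotient.mk_eq_mk_iff_sub_mem]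
      exact congrFun (congrFun h3 i) j
    have e1 : cj V - w = c • cj (V - B) + (c - 1) • (c • w - (cj V - w)) := by
      have : cj V = c • w + cj (V - B) := by rw [← hcjB, ← cj_add, ← hVB]
      rw [this]
      module
    rw [e1]
    refine Submodule.add_mem _ ?_ (Submodule.subset_span
      ⟨c - 1, hc, _, (hw.smul c).sub (h5.sub hw), rfl⟩)
    have cj_sum : ∀ (s : Finset (Fin n × Fin n)) (f : Fin n × Fin n → Matrix (Fin n) (Fin n) O),
        cj (∑ k ∈ s, f k) = ∑ k ∈ s, cj (f k) := by
      intro s f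
      induction s using Finset.induction with
      | empty => simp [cj]
      | insert k s hk ih => rw [Finset.sum_insert hk, Finset.sum_insert hk, cj_add, ih]
    have e2 : V - B = ∑ k : Fin n × Fin n, (V - B) k.1 k.2 • single k.1 k.2 1 := by
      conv_lhs => rw [matrix_eq_sum_single (V - B)]
      rw [Fintype.sum_prod_type]
      simp
    rw [e2, cj_sum, Finset.smul_sum]
    refine Submodule.sum_mem _ fun k _ => Submodule.subset_span
      ⟨(V - B) k.1 k.2, hg _ _, c • cj (single k.1 k.2 1), f3 _, ?_⟩
    rw [cj_smul, smul_comm]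

end SLLift

open scoped Matrix

set_option synthInstance.maxHeartbeats 1000000
set_option maxHeartbeats 1000000

theorem core {R K : Type*} [CommRing R] [IsDedekindDomain R] [Field K] [CharZero K]
    [Algebra R K] [IsFractionRing R K]
    {r : ℕ} (n : Fin r → ℕ) (hn : ∀ i, 0 < n i)
    (Kf : Fin r → Type*) [∀ i, Field (Kf i)] [∀ i, Algebra K (Kf i)]
    [∀ i, FiniteDimensional K (Kf i)]
    [∀ i, Algebra (R) (Kf i)] [∀ i, IsScalarTower (R) K (Kf i)]
    (M : Subalgebra (R) (∀ i, Matrix (Fin (n i)) (Fin (n i)) (Kf i)))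
    (hMfg : Module.Finite (R) M)
    (hMfull : Submodule.span K (M : Set (∀ i, Matrix (Fin (n i)) (Fin (n i)) (Kf i))) = ⊤)
    (hMmax : ∀ M' : Subalgebra (R) (∀ i, Matrix (Fin (n i)) (Fin (n i)) (Kf i)),
      Module.Finite (R) M' →
      Submodule.span K (M' : Set (∀ i, Matrix (Fin (n i)) (Fin (n i)) (Kf i))) = ⊤ →
      M ≤ M' → M' = M)
    (𝔤 : Submodule (R) (∀ i, Kf i))
    -- `𝔤 ⊆ O_C = M ∩ C`
    (h𝔤OC : ∀ g ∈ 𝔤, (fun i => Matrix.scalar (Fin (n i)) (g i)) ∈ M)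
    -- `𝔤` is an ideal of `O_C`
    (h𝔤ideal : ∀ c : ∀ i, Kf i, (fun i => Matrix.scalar (Fin (n i)) (c i)) ∈ M →
      ∀ g ∈ 𝔤, c * g ∈ 𝔤)
    -- `𝔤` is proper
    
    -- `𝔤` is full
    (h𝔤full : Submodule.span K (𝔤 : Set (∀ i, Kf i)) = ⊤) :
    ∀ w : ∀ i, Matrix (Fin (n i)) (Fin (n i)) (Kf i), w ∈ M →
      -- `w` is invertible modulo `𝔤M`
      (∃ w' ∈ M,
        w * w' - 1 ∈ Submodule.span (R) (Set.image2
          (fun (g : ∀ i, Kf i) (m : ∀ i, Matrix (Fin (n i)) (Fin (n i)) (Kf i)) =>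
            (fun i => Matrix.scalar (Fin (n i)) (g i)) * m)
          (𝔤 : Set (∀ i, Kf i)) (M : Set (∀ i, Matrix (Fin (n i)) (Fin (n i)) (Kf i)))) ∧
        w' * w - 1 ∈ Submodule.span (R) (Set.image2
          (fun (g : ∀ i, Kf i) (m : ∀ i, Matrix (Fin (n i)) (Fin (n i)) (Kf i)) =>
            (fun i => Matrix.scalar (Fin (n i)) (g i)) * m)
          (𝔤 : Set (∀ i, Kf i)) (M : Set (∀ i, Matrix (Fin (n i)) (Fin (n i)) (Kf i))))) →
      -- `nr w ≡ 1 (mod 𝔤)`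
      ((fun i => (w i).det) - 1 ∈ 𝔤) →
      -- there is a lift `v ∈ SL(M)` of `w̄`
      ∃ v : (∀ i, Matrix (Fin (n i)) (Fin (n i)) (Kf i))ˣ,
        (v : ∀ i, Matrix (Fin (n i)) (Fin (n i)) (Kf i)) ∈ M ∧
        ((v⁻¹ : (∀ i, Matrix (Fin (n i)) (Fin (n i)) (Kf i))ˣ) :
          ∀ i, Matrix (Fin (n i)) (Fin (n i)) (Kf i)) ∈ M ∧
        (fun i => ((v : ∀ i, Matrix (Fin (n i)) (Fin (n i)) (Kf i)) i).det) = 1 ∧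
        (v : ∀ i, Matrix (Fin (n i)) (Fin (n i)) (Kf i)) - w ∈
          Submodule.span (R) (Set.image2
            (fun (g : ∀ i, Kf i) (m : ∀ i, Matrix (Fin (n i)) (Fin (n i)) (Kf i)) =>
              (fun i => Matrix.scalar (Fin (n i)) (g i)) * m)
            (𝔤 : Set (∀ i, Kf i)) (M : Set (∀ i, Matrix (Fin (n i)) (Fin (n i)) (Kf i)))) := by
  classical
  have hded : ∀ i, IsDedekindDomain (integralClosure (R) (Kf i)) := fun i =>
    integralClosure.isDedekindDomain (R) K (Kf i)
  have hfrac : ∀ i, IsFractionRing (integralClosure (R) (Kf i)) (Kf i) := fun i =>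
    integralClosure.isFractionRing_of_finite_extension K (Kf i)
  have hfin : ∀ i, Module.Finite (R) (integralClosure (R) (Kf i)) := fun i =>
    IsIntegralClosure.finite (R) K (Kf i) (integralClosure (R) (Kf i))
  -- the action
  let act : (∀ i, Matrix (Fin (n i)) (Fin (n i)) (Kf i)) →ₗ[R]
      (∀ i, Fin (n i) → Kf i) →ₗ[R] (∀ i, Fin (n i) → Kf i) :=
    LinearMap.mk₂ (R) (fun x p i => x i *ᵥ p i)
      (fun x y p => funext fun i => Matrix.add_mulVec _ _ _)
      (fun a x p => funext fun i => by
        show (a • x i) *ᵥ p i = a • (x i *ᵥ p i)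
        exact Matrix.smul_mulVec a (x i) (p i))
      (fun x p q => funext fun i => Matrix.mulVec_add _ _ _)
      (fun a x p => funext fun i => by
        show x i *ᵥ (a • p i) = a • (x i *ᵥ p i)
        exact Matrix.mulVec_smul (x i) a (p i))
  have act_apply : ∀ x p i, act x p i = x i *ᵥ p i := fun x p i => rfl
  have act_mul : ∀ x y p, act (x * y) p = act x (act y p) := fun x y p => funext fun i => by
    show (x i * y i) *ᵥ p i = x i *ᵥ (y i *ᵥ p i)
    exact (Matrix.mulVec_mulVec (p i) (x i) (y i)).symm
  have act_one : ∀ p, act 1 p = p := fun p => funext fun i => Matrix.one_mulVec _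
  let f : (∀ i, Fin (n i) → integralClosure (R) (Kf i)) →ₗ[R] (∀ i, Fin (n i) → Kf i) :=
    { toFun := fun y i j => (y i j : Kf i)
      map_add' := fun _ _ => rfl
      map_smul' := fun _ _ => rfl }
  let L : Submodule (R) (∀ i, Fin (n i) → Kf i) := LinearMap.range f
  have hL : ∀ l, l ∈ L ↔ ∀ i j, l i j ∈ integralClosure (R) (Kf i) := by
    intro l
    constructor
    · rintro ⟨y, rfl⟩ i j
      exact (y i j).2
    · intro h
      exact ⟨fun i j => ⟨l i j, h i j⟩, rfl⟩
  have hLfg : L.FG := by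
    have : Module.Finite (R) L := Module.Finite.range f
    exact Module.Finite.iff_fg.1 this
  let P : Submodule (R) (∀ i, Fin (n i) → Kf i) := Submodule.map₂ act (Subalgebra.toSubmodule M) L
  have hMfg' : (Subalgebra.toSubmodule M).FG := Module.Finite.iff_fg.1 hMfg
  have hPfg : P.FG := hMfg'.map₂ act hLfg
  have hLP : ∀ l ∈ L, l ∈ P := by
    intro l hl
    have := Submodule.apply_mem_map₂ act (show (1 : ∀ i, Matrix (Fin (n i)) (Fin (n i)) (Kf i)) ∈
      Subalgebra.toSubmodule M from M.one_mem) hl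
    rwa [act_one] at this
  have hPc : ∀ c : ∀ i, Kf i, (∀ i, c i ∈ integralClosure (R) (Kf i)) →
      ∀ p ∈ P, (fun i => c i • p i) ∈ P := by
    intro c hc
    let g : (∀ i, Fin (n i) → Kf i) →ₗ[R] (∀ i, Fin (n i) → Kf i) :=
      { toFun := fun p i => c i • p i
        map_add' := fun p q => funext fun i => smul_add _ _ _
        map_smul' := fun a p => funext fun i => by
          show c i • (a • p i) = a • (c i • p i)
          exact smul_comm _ _ _ }
    have : P ≤ P.comap g := by
      refine Submodule.map₂_le.2 ?_
      intro m hm l hl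
      have e : g (act m l) = act m (g l) := funext fun i => by
        show c i • (m i *ᵥ l i) = m i *ᵥ (c i • l i)
        exact (Matrix.mulVec_smul _ _ _).symm
      rw [Submodule.mem_comap, e]
      refine Submodule.apply_mem_map₂ act hm ?_
      rw [hL] at hl ⊢
      intro i j
      exact mul_mem (hc i) (hl i j)
    exact this
  let M' : Subalgebra (R) (∀ i, Matrix (Fin (n i)) (Fin (n i)) (Kf i)) :=
    { carrier := {x | ∀ p ∈ P, act x p ∈ P}
      mul_mem' := fun {x y} hx hy p hp => by rw [act_mul]; exact hx _ (hy p hp)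
      add_mem' := fun {x y} hx hy p hp => by
        rw [map_add, LinearMap.add_apply]; exact P.add_mem (hx p hp) (hy p hp)
      algebraMap_mem' := fun a p hp => by
        rw [Algebra.algebraMap_eq_smul_one, map_smul, LinearMap.smul_apply, act_one]
        exact P.smul_mem _ hp }
  have hM'mem : ∀ x, x ∈ M' ↔ ∀ p ∈ P, act x p ∈ P := fun x => Iff.rfl
  have hMM' : M ≤ M' := by
    intro x hx
    rw [hM'mem]
    have : P ≤ P.comap (act x) := by
      refine Submodule.map₂_le.2 ?_
      intro m hm l hl
      rw [Submodule.mem_comap, ← act_mul]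
      exact Submodule.apply_mem_map₂ act (show x * m ∈ Subalgebra.toSubmodule M from M.mul_mem hx hm) hl
    exact this
  have hsingleL : ∀ i j, (Pi.single i (Pi.single j 1) : ∀ i, Fin (n i) → Kf i) ∈ L := by
    intro i j
    rw [hL]
    intro i' j'
    by_cases h : i' = i
    · subst h
      rw [Pi.single_eq_same]
      by_cases h' : j' = j
      · subst h'; rw [Pi.single_eq_same]; exact one_mem _
      · rw [Pi.single_eq_of_ne h']; exact zero_mem _
    · rw [Pi.single_eq_of_ne h]; exact zero_mem _
  have hM'fin : Module.Finite (R) M' := by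
    obtain ⟨G, hG⟩ := hPfg
    have hPfin : Module.Finite (R) P := Module.Finite.iff_fg.2 ⟨G, hG⟩
    let ψ : M' →ₗ[R] (G → P) :=
      { toFun := fun x g => ⟨act x.1 g.1, x.2 _ (hG ▸ Submodule.subset_span g.2)⟩
        map_add' := fun x y => funext fun g => Subtype.ext (by
          show act (x.1 + y.1) g.1 = act x.1 g.1 + act y.1 g.1
          rw [map_add, LinearMap.add_apply])
        map_smul' := fun a x => funext fun g => Subtype.ext (by
          show act (a • x.1) g.1 = a • act x.1 g.1
          rw [map_smul, LinearMap.smul_apply]) }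
    refine Module.Finite.of_injective ψ ?_
    rw [← LinearMap.ker_eq_bot, LinearMap.ker_eq_bot']
    intro x hx
    have h1 : P ≤ LinearMap.ker (act x.1) := by
      rw [← hG, Submodule.span_le]
      intro g hg
      exact congrArg Subtype.val (congrFun hx ⟨g, hg⟩)
    apply Subtype.ext
    funext i
    ext k j
    have h2 := congrFun (congrFun (LinearMap.mem_ker.1 (h1 (hLP _ (hsingleL i j)))) i) k
    rw [act_apply, Pi.single_eq_same, Matrix.mulVec_single_one] at h2
    exact h2
  have hMeq : M' = M := hMmax M' hM'fin
    (top_le_iff.1 (hMfull ▸ Submodule.span_mono hMM')) hMM'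
  -- the components of the lattice
  let Q : ∀ i, Submodule (integralClosure (R) (Kf i)) (Fin (n i) → Kf i) := fun i =>
    { carrier := {p | (Pi.single i p : ∀ i, Fin (n i) → Kf i) ∈ P}
      zero_mem' := by
        show (Pi.single i 0 : ∀ i, Fin (n i) → Kf i) ∈ P
        rw [Pi.single_zero]; exact P.zero_mem
      add_mem' := fun {p q} hp hq => by
        show (Pi.single i (p + q) : ∀ i, Fin (n i) → Kf i) ∈ P
        rw [Pi.single_add]; exact P.add_mem hp hq
      smul_mem' := fun a p hp => by
        have := hPc (Pi.single i (a : Kf i)) (fun i' => by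
          by_cases h : i' = i
          · subst h; rw [Pi.single_eq_same]; exact a.2
          · rw [Pi.single_eq_of_ne h]; exact zero_mem _) _ hp
        show (Pi.single i (a • p) : ∀ i, Fin (n i) → Kf i) ∈ P
        convert this using 1
        funext i'
        by_cases h : i' = i
        · subst h; rw [Pi.single_eq_same, Pi.single_eq_same, Pi.single_eq_same]; rfl
        · rw [Pi.single_eq_of_ne h, Pi.single_eq_of_ne h, Pi.single_eq_of_ne h, smul_zero] }
  have hQ : ∀ i p, p ∈ Q i ↔ (Pi.single i p : ∀ i, Fin (n i) → Kf i) ∈ P := fun i p => Iff.rfl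
  have hQP : ∀ p ∈ P, ∀ i, p i ∈ Q i := by
    intro p hp i
    rw [hQ]
    have := hPc (Pi.single i 1) (fun i' => by
          by_cases h : i' = i
          · subst h; rw [Pi.single_eq_same]; exact one_mem _
          · rw [Pi.single_eq_of_ne h]; exact zero_mem _) _ hp
    convert this using 1
    funext i'
    by_cases h : i' = i
    · subst h; rw [Pi.single_eq_same, Pi.single_eq_same, one_smul]
    · rw [Pi.single_eq_of_ne h, Pi.single_eq_of_ne h, zero_smul]
  have hPQ : ∀ p, (∀ i, p i ∈ Q i) → p ∈ P := by
    intro p hp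
    rw [← Finset.univ_sum_single p]
    exact P.sum_mem fun i _ => hp i
  have hmemM : ∀ x, x ∈ M ↔ ∀ i, SLLift.Stab (Q i) (x i) := by
    intro x
    rw [← hMeq, hM'mem]
    constructor
    · intro h i p hp
      have := hQP _ (h _ hp) i
      rwa [act_apply, Pi.single_eq_same] at this
    · intro h p hp
      exact hPQ _ fun i => h i _ (hQP p hp i)
  have hQfg : ∀ i, (Q i).FG := by
    intro i
    obtain ⟨G, hG⟩ := hPfg
    refine ⟨G.image (fun p => p i), le_antisymm ?_ ?_⟩
    · rw [Submodule.span_le]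
      intro q hq
      obtain ⟨p, hp, rfl⟩ := Finset.mem_image.1 hq
      exact hQP p (hG ▸ Submodule.subset_span hp) i
    · intro q hq
      have h1 : P ≤ ((Submodule.span (integralClosure (R) (Kf i))
          ((G.image (fun p => p i) : Finset _) : Set (Fin (n i) → Kf i))).restrictScalars
            (R)).comap (LinearMap.proj i) := by
        rw [← hG, Submodule.span_le]
        intro g hg
        exact Submodule.subset_span (Finset.mem_coe.2 (Finset.mem_image.2 ⟨g, hg, rfl⟩))
      have h2 := h1 ((hQ i q).1 hq)
      rw [Submodule.mem_comap, LinearMap.proj_apply, Pi.single_eq_same] at h2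
      exact h2
  have hQspan : ∀ i, Submodule.span (Kf i) (Q i : Set (Fin (n i) → Kf i)) = ⊤ := by
    intro i
    rw [← top_le_iff, ← (Pi.basisFun (Kf i) (Fin (n i))).span_eq]
    apply Submodule.span_mono
    rintro _ ⟨j, rfl⟩
    rw [Pi.basisFun_apply]
    exact hLP _ (hsingleL i j)
  -- the components of the ideal
  have hscal : ∀ c : ∀ i, Kf i, (∀ i, c i ∈ integralClosure (R) (Kf i)) →
      (fun i => Matrix.scalar (Fin (n i)) (c i)) ∈ M := by
    intro c hc
    rw [hmemM]
    intro i p hp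
    have e : Matrix.scalar (Fin (n i)) (c i) *ᵥ p =
        (⟨c i, hc i⟩ : integralClosure (R) (Kf i)) • p := by
      ext j
      simp [Matrix.scalar_apply, Matrix.mulVec_diagonal]
      rfl
    rw [e]
    exact (Q i).smul_mem _ hp
  have hgint : ∀ g ∈ 𝔤, ∀ i, g i ∈ integralClosure (R) (Kf i) := by
    intro g hg i
    have h1 := IsIntegral.of_mem_of_fg M hMfg' _ (h𝔤OC g hg)
    have h2 := h1.map (Pi.evalAlgHom (R) (fun i => Matrix (Fin (n i)) (Fin (n i)) (Kf i)) i)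
    have h3 : IsIntegral (R) (algebraMap (Kf i) (Matrix (Fin (n i)) (Fin (n i)) (Kf i)) (g i)) := h2
    have : Nonempty (Fin (n i)) := ⟨⟨0, hn i⟩⟩
    rw [isIntegral_algebraMap_iff (FaithfulSMul.algebraMap_injective _ _)] at h3
    exact h3
  have hsing : ∀ i, ∀ a ∈ integralClosure (R) (Kf i), ∀ i',
      (Pi.single i a : ∀ i, Kf i) i' ∈ integralClosure (R) (Kf i') := by
    intro i a ha i'
    by_cases h : i' = i
    · subst h; rw [Pi.single_eq_same]; exact ha
    · rw [Pi.single_eq_of_ne h]; exact zero_mem _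
  let J : ∀ i, Ideal (integralClosure (R) (Kf i)) := fun i =>
    { carrier := {a | (Pi.single i (a : Kf i) : ∀ i, Kf i) ∈ 𝔤}
      zero_mem' := by
        show (Pi.single i 0 : ∀ i, Kf i) ∈ 𝔤
        rw [Pi.single_zero]; exact 𝔤.zero_mem
      add_mem' := fun {p q} hp hq => by
        show (Pi.single i ((p : Kf i) + q) : ∀ i, Kf i) ∈ 𝔤
        rw [Pi.single_add]; exact 𝔤.add_mem hp hq
      smul_mem' := fun a p hp => by
        have := h𝔤ideal (Pi.single i (a : Kf i)) (hscal _ (hsing i _ a.2)) _ hp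
        rw [← Pi.single_mul] at this
        exact this }
  have hJ : ∀ i a, a ∈ J i ↔ (Pi.single i (a : Kf i) : ∀ i, Kf i) ∈ 𝔤 := fun i a => Iff.rfl
  have hJg : ∀ g (hg : g ∈ 𝔤) i, (⟨g i, hgint g hg i⟩ : integralClosure (R) (Kf i)) ∈ J i := by
    intro g hg i
    rw [hJ]
    have := h𝔤ideal (Pi.single i 1) (hscal _ (hsing i _ (one_mem _))) _ hg
    convert this using 1
    funext i'
    by_cases h : i' = i
    · subst h; simp
    · simp [Pi.single_eq_of_ne h]
  have hJ0 : ∀ i, J i ≠ ⊥ := by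
    intro i h0
    have h1 : Submodule.span K (𝔤 : Set (∀ i, Kf i)) ≤ LinearMap.ker (LinearMap.proj i) := by
      rw [Submodule.span_le]
      intro g hg
      have := hJg g hg i
      rw [h0, Submodule.mem_bot] at this
      exact congrArg Subtype.val this
    rw [h𝔤full] at h1
    have h2 := h1 (Submodule.mem_top (x := (1 : ∀ i, Kf i)))
    exact one_ne_zero (LinearMap.mem_ker.1 h2)
  intro w hw _ hdet
  have hw' := (hmemM w).1 hw
  have main := fun i => SLLift.lift_single (Q i) (hQfg i) (hQspan i) (J i) (hJ0 i) (w i) (hw' i)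
    ⟨_, hJg _ hdet i, rfl⟩
  choose v v' h1 h2 h3 h4 h5 h6 using main
  refine ⟨⟨v, v', funext h1, funext h2⟩, (hmemM v).2 h3, (hmemM v').2 h4, funext h5, ?_⟩
  show v - w ∈ _
  rw [← Finset.univ_sum_single (v - w)]
  refine Submodule.sum_mem _ fun i _ => ?_
  have h7 := h6 i
  rw [Pi.sub_apply]
  refine Submodule.closure_induction (p := fun x _ =>
    (Pi.single i x : ∀ i, Matrix (Fin (n i)) (Fin (n i)) (Kf i)) ∈ _) ?_ ?_ ?_ h7
  · rw [Pi.single_zero]; exact Submodule.zero_mem _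
  · intro x y _ _ hx hy
    rw [Pi.single_add]; exact Submodule.add_mem _ hx hy
  · rintro b _ ⟨a, ha, m, hm, rfl⟩
    apply Submodule.subset_span
    refine ⟨Pi.single i ((b * a : integralClosure (R) (Kf i)) : Kf i), (J i).mul_mem_left b ha,
      Pi.single i m, ?_, ?_⟩
    · refine (hmemM _).2 fun i' => ?_
      by_cases h : i' = i
      · subst h; rw [Pi.single_eq_same]; exact hm
      · rw [Pi.single_eq_of_ne h]
        intro p _
        rw [Matrix.zero_mulVec]; exact Submodule.zero_mem _
    · funext i'
      show Matrix.scalar (Fin (n i'))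
        ((Pi.single i ((b * a : integralClosure R (Kf i)) : Kf i) : ∀ i, Kf i) i') *
          (Pi.single i m : ∀ i, Matrix (Fin (n i)) (Fin (n i)) (Kf i)) i' = _
      by_cases h : i' = i
      · subst h
        rw [Pi.single_eq_same, Pi.single_eq_same, Pi.single_eq_same, smul_smul]
        ext k l
        simp [Matrix.scalar_apply, Matrix.diagonal_mul]
        rfl
      · rw [Pi.single_eq_of_ne h, Pi.single_eq_of_ne h, mul_zero, Pi.single_eq_of_ne h]

/-- Let `K` be a number field, `A = ∏_{i=1}^r Mat_{n_i}(K_i)` with the `K_i` finite field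
extensions of `K`, `M` a maximal `O_K`-order in `A`, `O_C = M ∩ C` (the centre `C = ∏ K_i`
embedded diagonally via scalar matrices), and let `𝔤` be a proper full ideal of `O_C`.
Then the canonical map `f₁ : SL(M) → SL(M/𝔤M)` is surjective:  every element `w` of `M`
that is invertible modulo `𝔤M` and has reduced norm (componentwise determinant)
congruent to `1` modulo `𝔤` is congruent modulo `𝔤M` to a unit `v` of `M` with
reduced norm exactly `1`. -/
theorem stmt_12 {K : Type*} [Field K] [NumberField K]
    {r : ℕ} (hr : 0 < r) (n : Fin r → ℕ) (hn : ∀ i, 0 < n i)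
    (Kf : Fin r → Type*) [∀ i, Field (Kf i)] [∀ i, Algebra K (Kf i)]
    [∀ i, FiniteDimensional K (Kf i)]
    [∀ i, Algebra (𝓞 K) (Kf i)] [∀ i, IsScalarTower (𝓞 K) K (Kf i)]
    (M : Subalgebra (𝓞 K) (∀ i, Matrix (Fin (n i)) (Fin (n i)) (Kf i)))
    (hMfg : Module.Finite (𝓞 K) M)
    (hMfull : Submodule.span K (M : Set (∀ i, Matrix (Fin (n i)) (Fin (n i)) (Kf i))) = ⊤)
    (hMmax : ∀ M' : Subalgebra (𝓞 K) (∀ i, Matrix (Fin (n i)) (Fin (n i)) (Kf i)),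
      Module.Finite (𝓞 K) M' →
      Submodule.span K (M' : Set (∀ i, Matrix (Fin (n i)) (Fin (n i)) (Kf i))) = ⊤ →
      M ≤ M' → M' = M)
    (𝔤 : Submodule (𝓞 K) (∀ i, Kf i))
    -- `𝔤 ⊆ O_C = M ∩ C`
    (h𝔤OC : ∀ g ∈ 𝔤, (fun i => Matrix.scalar (Fin (n i)) (g i)) ∈ M)
    -- `𝔤` is an ideal of `O_C`
    (h𝔤ideal : ∀ c : ∀ i, Kf i, (fun i => Matrix.scalar (Fin (n i)) (c i)) ∈ M →
      ∀ g ∈ 𝔤, c * g ∈ 𝔤)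
    -- `𝔤` is proper
    (h𝔤proper : (1 : ∀ i, Kf i) ∉ 𝔤)
    -- `𝔤` is full
    (h𝔤full : Submodule.span K (𝔤 : Set (∀ i, Kf i)) = ⊤) :
    ∀ w : ∀ i, Matrix (Fin (n i)) (Fin (n i)) (Kf i), w ∈ M →
      -- `w` is invertible modulo `𝔤M`
      (∃ w' ∈ M,
        w * w' - 1 ∈ Submodule.span (𝓞 K) (Set.image2
          (fun (g : ∀ i, Kf i) (m : ∀ i, Matrix (Fin (n i)) (Fin (n i)) (Kf i)) =>
            (fun i => Matrix.scalar (Fin (n i)) (g i)) * m)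
          (𝔤 : Set (∀ i, Kf i)) (M : Set (∀ i, Matrix (Fin (n i)) (Fin (n i)) (Kf i)))) ∧
        w' * w - 1 ∈ Submodule.span (𝓞 K) (Set.image2
          (fun (g : ∀ i, Kf i) (m : ∀ i, Matrix (Fin (n i)) (Fin (n i)) (Kf i)) =>
            (fun i => Matrix.scalar (Fin (n i)) (g i)) * m)
          (𝔤 : Set (∀ i, Kf i)) (M : Set (∀ i, Matrix (Fin (n i)) (Fin (n i)) (Kf i))))) →
      -- `nr w ≡ 1 (mod 𝔤)`
      ((fun i => (w i).det) - 1 ∈ 𝔤) →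
      -- there is a lift `v ∈ SL(M)` of `w̄`
      ∃ v : (∀ i, Matrix (Fin (n i)) (Fin (n i)) (Kf i))ˣ,
        (v : ∀ i, Matrix (Fin (n i)) (Fin (n i)) (Kf i)) ∈ M ∧
        ((v⁻¹ : (∀ i, Matrix (Fin (n i)) (Fin (n i)) (Kf i))ˣ) :
          ∀ i, Matrix (Fin (n i)) (Fin (n i)) (Kf i)) ∈ M ∧
        (fun i => ((v : ∀ i, Matrix (Fin (n i)) (Fin (n i)) (Kf i)) i).det) = 1 ∧
        (v : ∀ i, Matrix (Fin (n i)) (Fin (n i)) (Kf i)) - w ∈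
          Submodule.span (𝓞 K) (Set.image2
            (fun (g : ∀ i, Kf i) (m : ∀ i, Matrix (Fin (n i)) (Fin (n i)) (Kf i)) =>
              (fun i => Matrix.scalar (Fin (n i)) (g i)) * m)
            (𝔤 : Set (∀ i, Kf i)) (M : Set (∀ i, Matrix (Fin (n i)) (Fin (n i)) (Kf i)))) := by
  revert M
  generalize hα : @RingOfIntegers.instAlgebra K _
    (∀ i, Matrix (Fin (n i)) (Fin (n i)) (Kf i)) _ _ = α
  have hα' : α = @Pi.algebra (Fin r) (𝓞 K) (fun i => Matrix (Fin (n i)) (Fin (n i)) (Kf i)) _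
      (fun i => Matrix.semiring) (fun i => Matrix.instAlgebra) := by
    rw [← hα]
    refine Algebra.algebra_ext _ _ fun a => ?_
    funext i
    show algebraMap K (Matrix (Fin (n i)) (Fin (n i)) (Kf i)) (algebraMap (𝓞 K) K a) =
      Matrix.scalar (Fin (n i)) (algebraMap (𝓞 K) (Kf i) a)
    rw [IsScalarTower.algebraMap_apply (𝓞 K) K (Kf i)]
    rfl
  clear hα
  subst hα'
  intro M hMfg hMfull hMmax h𝔤OC h𝔤ideal
  exact core n hn Kf M hMfg hMfull hMmax 𝔤 h𝔤OC h𝔤ideal h𝔤full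
end

section
/- Let R be a commutative ring, n a positive integer, and A, B ∈ Mat_n(R). Then A and B are similar over R (i.e. there exists C ∈ GL_n(R) with B = CAC⁻¹) if and only if: (a) the C_R(B)-module C_R(A, B) is free of rank 1, and (b) every (equivalently, any) free generator C of C_R(A, B) over C_R(B) lies in GL_n(R). Furthermore, when this is the case, such a generator C satisfies B = CAC⁻¹. -/
/-- Let `R` be a commutative ring, `n` a positive integer, and `A, B ∈ Mat_n(R)`.
Then `A` and `B` are similar over `R` if and only if
(a) the `C_R(B)`-module `C_R(A,B)` is free of rank 1 (i.e. it has a free generator `G`,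
meaning every element of `C_R(A,B)` is uniquely of the form `D * G` with `D ∈ C_R(B)`), and
(b) every (equivalently, any) free generator `G` of `C_R(A,B)` over `C_R(B)` is invertible.
Furthermore, when this is the case, such a generator `G` satisfies `B = G * A * G⁻¹`,
i.e. `B * G = G * A` with `G` invertible. -/
theorem stmt_14 {R : Type*} [CommRing R] {n : ℕ} (hn : 0 < n)
    (A B : Matrix (Fin n) (Fin n) R) :
    ((∃ C : (Matrix (Fin n) (Fin n) R)ˣ, B = (C : Matrix (Fin n) (Fin n) R) * A * (↑C⁻¹ : Matrix (Fin n) (Fin n) R)) ↔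
      ((∃ G : Matrix (Fin n) (Fin n) R, G * A = B * G ∧
          (∀ X : Matrix (Fin n) (Fin n) R, X * A = B * X →
            ∃! D : Matrix (Fin n) (Fin n) R, D * B = B * D ∧ X = D * G)) ∧
        (∀ G : Matrix (Fin n) (Fin n) R, G * A = B * G →
          (∀ X : Matrix (Fin n) (Fin n) R, X * A = B * X →
            ∃! D : Matrix (Fin n) (Fin n) R, D * B = B * D ∧ X = D * G) →
          IsUnit G))) ∧
    (∀ G : Matrix (Fin n) (Fin n) R, G * A = B * G →
      (∀ X : Matrix (Fin n) (Fin n) R, X * A = B * X →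
        ∃! D : Matrix (Fin n) (Fin n) R, D * B = B * D ∧ X = D * G) →
      ∀ u : (Matrix (Fin n) (Fin n) R)ˣ, (u : Matrix (Fin n) (Fin n) R) = G →
        B = (u : Matrix (Fin n) (Fin n) R) * A * (↑u⁻¹ : Matrix (Fin n) (Fin n) R)) := by
  have key : ∀ u : (Matrix (Fin n) (Fin n) R)ˣ,
      (B = (u : Matrix (Fin n) (Fin n) R) * A * (↑u⁻¹ : Matrix (Fin n) (Fin n) R)) ↔
        (u : Matrix (Fin n) (Fin n) R) * A = B * u := by
    intro u
    rw [Units.eq_mul_inv_iff_mul_eq, eq_comm]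
  refine ⟨⟨?_, ?_⟩, ?_⟩
  · rintro ⟨C, hC⟩
    have hCA := (key C).1 hC
    have hinv : (↑C⁻¹ : Matrix (Fin n) (Fin n) R) * B = A * (↑C⁻¹ : Matrix (Fin n) (Fin n) R) := by
      rw [Units.inv_mul_eq_iff_eq_mul, ← mul_assoc]
      exact hC
    refine ⟨⟨C, hCA, ?_⟩, ?_⟩
    · intro X hX
      refine ⟨X * (↑C⁻¹ : Matrix (Fin n) (Fin n) R), ⟨?_, ?_⟩, ?_⟩
      · rw [mul_assoc, hinv, ← mul_assoc, hX, mul_assoc]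
      · rw [Units.inv_mul_cancel_right]
      · rintro D ⟨-, hD⟩
        rw [hD, Units.mul_inv_cancel_right]
    · intro G _ hgen
      obtain ⟨D, ⟨-, hD⟩, -⟩ := hgen C hCA
      have h : ((↑C⁻¹ : Matrix (Fin n) (Fin n) R) * D) * G = 1 := by
        rw [mul_assoc, ← hD, Units.inv_mul]
      exact IsUnit.of_mul_eq_one_right _ h
  · rintro ⟨⟨G, hG, hgen⟩, hall⟩
    obtain ⟨u, rfl⟩ := hall G hG hgen
    exact ⟨u, (key u).2 hG⟩
  · rintro G hG - u rfl
    exact (key u).2 hG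
end

section
/- Let R be an integral domain, n a positive integer, and A, B ∈ Mat_n(R). Then A and B are similar over R if and only if: (a) the C_R(B)-module C_R(A, B) is free of rank 1, and (b) for every maximal ideal 𝔭 of R, the matrices A and B are similar over the localisation R_𝔭. Furthermore, when this is the case, any free generator C of C_R(A, B) over C_R(B) satisfies B = CAC⁻¹. -/
lemma conj_of_unit {S : Type*} [CommRing S] {n : ℕ} (A B : Matrix (Fin n) (Fin n) S)
    (u : (Matrix (Fin n) (Fin n) S)ˣ) :
    B = (u : Matrix (Fin n) (Fin n) S) * A * (↑u⁻¹ : Matrix (Fin n) (Fin n) S) ↔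
      (u : Matrix (Fin n) (Fin n) S) * A = B * u := by
  rw [Units.eq_mul_inv_iff_mul_eq]
  exact eq_comm

lemma local_det {R : Type*} [CommRing R] [IsDomain R] {n : ℕ}
    (A B G : Matrix (Fin n) (Fin n) R)
    (hG : ∀ X : Matrix (Fin n) (Fin n) R, X * A = B * X →
            ∃! D : Matrix (Fin n) (Fin n) R, D * B = B * D ∧ X = D * G)
    (p : Ideal R) [p.IsMaximal]
    (C : (Matrix (Fin n) (Fin n) (Localization.AtPrime p))ˣ)
    (hC : (C : Matrix (Fin n) (Fin n) (Localization.AtPrime p)) *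
        A.map (algebraMap R (Localization.AtPrime p)) =
          B.map (algebraMap R (Localization.AtPrime p)) * C) : G.det ∉ p := by
  obtain ⟨s, hs⟩ := IsLocalization.exist_integer_multiples_of_finite p.primeCompl
    (fun ij : Fin n × Fin n => (C : Matrix (Fin n) (Fin n) (Localization.AtPrime p)) ij.1 ij.2)
  choose x hx using hs
  let X : Matrix (Fin n) (Fin n) R := Matrix.of fun i j => x (i, j)
  have hX : X.map (algebraMap R (Localization.AtPrime p)) =
      (s : R) • (C : Matrix (Fin n) (Fin n) (Localization.AtPrime p)) := by
    ext i j
    exact hx (i, j)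
  have hinj : Function.Injective (algebraMap R (Localization.AtPrime p)) :=
    IsLocalization.injective _ p.primeCompl_le_nonZeroDivisors
  have hXA : X * A = B * X := by
    apply Matrix.map_injective hinj
    simp only [Matrix.map_mul, hX, Matrix.smul_mul, Matrix.mul_smul, hC]
  obtain ⟨D, ⟨_, hD⟩, _⟩ := hG X hXA
  have hu : IsUnit (algebraMap R (Localization.AtPrime p) X.det) := by
    rw [RingHom.map_det, RingHom.mapMatrix_apply, hX, ← algebraMap_smul (Localization.AtPrime p),
      Matrix.det_smul]
    exact ((IsLocalization.map_units _ s).pow _).mul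
      ((Matrix.isUnit_iff_isUnit_det _).1 C.isUnit)
  have hXp : X.det ∈ p.primeCompl := (IsLocalization.AtPrime.isUnit_to_map_iff _ p _).1 hu
  intro h
  apply hXp
  rw [hD, Matrix.det_mul]
  exact p.mul_mem_left _ h


/-- Let `R` be an integral domain, `n` a positive integer, and `A, B ∈ Mat_n(R)`.
Then `A` and `B` are similar over `R` if and only if
(a) the `C_R(B)`-module `C_R(A,B)` is free of rank 1 (it has a free generator `G`:
every element of `C_R(A,B)` is uniquely of the form `D * G` with `D ∈ C_R(B)`), and
(b) for every maximal ideal `𝔭` of `R`, the matrices `A` and `B` are similar over the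
localisation `R_𝔭`.  Furthermore, when this is the case, any free generator `G` of
`C_R(A,B)` over `C_R(B)` is invertible and satisfies `B = G * A * G⁻¹`. -/
theorem stmt_15 {R : Type*} [CommRing R] [IsDomain R] {n : ℕ} (hn : 0 < n)
    (A B : Matrix (Fin n) (Fin n) R) :
    ((∃ C : (Matrix (Fin n) (Fin n) R)ˣ,
        B = (C : Matrix (Fin n) (Fin n) R) * A * (↑C⁻¹ : Matrix (Fin n) (Fin n) R)) ↔
      ((∃ G : Matrix (Fin n) (Fin n) R, G * A = B * G ∧
          (∀ X : Matrix (Fin n) (Fin n) R, X * A = B * X →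
            ∃! D : Matrix (Fin n) (Fin n) R, D * B = B * D ∧ X = D * G)) ∧
        (∀ (𝔭 : Ideal R) [𝔭.IsMaximal],
          ∃ C : (Matrix (Fin n) (Fin n) (Localization.AtPrime 𝔭))ˣ,
            B.map (algebraMap R (Localization.AtPrime 𝔭)) =
              (C : Matrix (Fin n) (Fin n) (Localization.AtPrime 𝔭)) *
                A.map (algebraMap R (Localization.AtPrime 𝔭)) *
                  (↑C⁻¹ : Matrix (Fin n) (Fin n) (Localization.AtPrime 𝔭))))) ∧
    (∀ G : Matrix (Fin n) (Fin n) R, G * A = B * G →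
      (∀ X : Matrix (Fin n) (Fin n) R, X * A = B * X →
        ∃! D : Matrix (Fin n) (Fin n) R, D * B = B * D ∧ X = D * G) →
      (∃ C : (Matrix (Fin n) (Fin n) R)ˣ,
        B = (C : Matrix (Fin n) (Fin n) R) * A * (↑C⁻¹ : Matrix (Fin n) (Fin n) R)) →
      IsUnit G ∧
        ∀ u : (Matrix (Fin n) (Fin n) R)ˣ, (u : Matrix (Fin n) (Fin n) R) = G →
          B = (u : Matrix (Fin n) (Fin n) R) * A * (↑u⁻¹ : Matrix (Fin n) (Fin n) R)) := by
  simp only [conj_of_unit]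
  refine ⟨⟨?_, ?_⟩, ?_⟩
  · rintro ⟨C, hC⟩
    refine ⟨⟨C, hC, fun X hX => ⟨X * (↑C⁻¹ : Matrix (Fin n) (Fin n) R), ⟨?_, by simp⟩, ?_⟩⟩, ?_⟩
    · have h2 : (↑C⁻¹ : Matrix (Fin n) (Fin n) R) * B = A * (↑C⁻¹ : Matrix (Fin n) (Fin n) R) := by
        rw [Units.inv_mul_eq_iff_eq_mul, ← mul_assoc, hC, mul_assoc, Units.mul_inv, mul_one]
      rw [mul_assoc, h2, ← mul_assoc, hX, mul_assoc]
    · rintro D ⟨_, rfl⟩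
      simp
    · intro p _
      refine ⟨Units.map (algebraMap R (Localization.AtPrime p)).mapMatrix.toMonoidHom C, ?_⟩
      have := congrArg (algebraMap R (Localization.AtPrime p)).mapMatrix hC
      rw [map_mul, map_mul] at this
      exact this
  · rintro ⟨⟨G, hGA, hG⟩, hloc⟩
    have hu : IsUnit G := by
      rw [Matrix.isUnit_iff_isUnit_det]
      by_contra hnu
      obtain ⟨p, hp, hmem⟩ := exists_max_ideal_of_mem_nonunits hnu
      obtain ⟨C, hC⟩ := hloc p
      exact local_det A B G hG p C hC hmem
    obtain ⟨u, rfl⟩ := hu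
    exact ⟨u, hGA⟩
  · rintro G hGA hG ⟨C, hC⟩
    refine ⟨?_, fun u hu => hu ▸ hGA⟩
    obtain ⟨D, ⟨_, hD⟩, _⟩ := hG C hC
    have h := (Matrix.isUnit_iff_isUnit_det _).1 C.isUnit
    rw [hD, Matrix.det_mul] at h
    exact (Matrix.isUnit_iff_isUnit_det _).2 (isUnit_of_mul_isUnit_right h)
end

section
/- Let F be a field, n a positive integer, and A ∈ Mat_n(F). Then: (a) the minimal polynomial of A is squarefree if and only if the F-algebra C_F(A) = { X ∈ Mat_n(F) : XA = AX } is semisimple; (b) the characteristic polynomial of A is squarefree if and only if C_F(A) is isomorphic to a finite product of fields; (c) if A is nilpotent, then C_F(A)/J(C_F(A)) is isomorphic to ∏_{j=1}^m Mat_{d_j}(F) for some positive integers m, d_1, …, d_m, where J denotes the Jacobson radical. -/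
section helpers
open Polynomial Module

section
variable {F : Type*} [Field F] {n : ℕ} (A : Matrix (Fin n) (Fin n) F)

abbrev MV := Module.AEval' (Matrix.toLin' A)

lemma cent_comm (x : Subalgebra.centralizer F {A}) : x.1 * A = A * x.1 := by
  have := Subalgebra.mem_centralizer_iff F |>.1 x.2 A rfl
  exact this.symm

lemma cent_comm_aeval (x : Subalgebra.centralizer F {A}) (p : F[X]) :
    Matrix.toLin' x.1 * aeval (Matrix.toLin' A) p = aeval (Matrix.toLin' A) p * Matrix.toLin' x.1 := by
  have h : Commute (Matrix.toLin' x.1) (Matrix.toLin' A) := by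
    unfold Commute SemiconjBy
    rw [Module.End.mul_eq_comp, ← Matrix.toLin'_mul, cent_comm, Matrix.toLin'_mul, Module.End.mul_eq_comp]
  have : Commute (Matrix.toLin' x.1) (aeval (Matrix.toLin' A) p) := by
    induction p using Polynomial.induction_on' with
    | add p q hp hq => rw [map_add]; exact hp.add_right hq
    | monomial k a =>
      rw [aeval_monomial]
      exact (Algebra.commute_algebraMap_right a _).mul_right (h.pow_right k)
  exact this

noncomputable def centHom : Subalgebra.centralizer F {A} →+* Module.End F[X] (MV A) where
  toFun x :=
    { toFun := fun v => AEval'.of _ (Matrix.toLin' x.1 ((AEval'.of (Matrix.toLin' A)).symm v))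
      map_add' := by intro v w; simp only [map_add]
      map_smul' := by
        intro p v
        obtain ⟨v, rfl⟩ := (AEval'.of (Matrix.toLin' A)).surjective v
        have h1 : ∀ w, p • (AEval'.of (Matrix.toLin' A) w) = AEval'.of _ (aeval (Matrix.toLin' A) p w) := fun w => rfl
        have := LinearMap.congr_fun (cent_comm_aeval A x p) v
        simp only [Module.End.mul_apply] at this
        rw [RingHom.id_apply, h1, h1, LinearEquiv.symm_apply_apply, LinearEquiv.symm_apply_apply, this] }
  map_one' := by ext v; simp
  map_mul' x y := by
    refine LinearMap.ext fun v => ?_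
    simp [Matrix.mulVec_mulVec]
  map_zero' := by refine LinearMap.ext fun v => ?_; simp
  map_add' x y := by
    refine LinearMap.ext fun v => ?_
    simp

lemma centHom_bij : Function.Bijective (centHom A) := by
  constructor
  · intro x y h
    apply Subtype.ext
    apply Matrix.toLin'.injective
    refine LinearMap.ext fun v => ?_
    have := LinearMap.congr_fun h (AEval'.of _ v)
    simpa [centHom] using this
  · intro g
    let e := AEval'.of (Matrix.toLin' A)
    let l : (Fin n → F) →ₗ[F] (Fin n → F) := e.symm.toLinearMap ∘ₗ (g.restrictScalars F) ∘ₗ e.toLinearMap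
    refine ⟨⟨LinearMap.toMatrix' l, ?_⟩, ?_⟩
    · rw [Subalgebra.mem_centralizer_iff]
      rintro _ rfl
      apply Matrix.toLin'.injective
      rw [Matrix.toLin'_mul, Matrix.toLin'_mul, Matrix.toLin'_toMatrix']
      refine LinearMap.ext fun v => ?_
      have := g.map_smul X (e v)
      rw [AEval'.X_smul_of] at this
      apply e.injective
      simp only [LinearMap.comp_apply, l, LinearMap.restrictScalars_apply, LinearEquiv.coe_coe, LinearEquiv.apply_symm_apply]
      rw [this, ← AEval'.X_smul_of]
      simp [e]
    · refine LinearMap.ext fun v => ?_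
      simp only [centHom, RingHom.coe_mk, MonoidHom.coe_mk, OneHom.coe_mk, LinearMap.coe_mk, AddHom.coe_mk,
        Matrix.toLin'_toMatrix', l]
      simp [e]

noncomputable def centEquiv : Subalgebra.centralizer F {A} ≃+* Module.End F[X] (MV A) :=
  RingEquiv.ofBijective _ (centHom_bij A)

lemma mem_jac_of_nil {R : Type*} [Ring R] (x : R) (h : ∀ y, IsNilpotent (y * x)) :
    x ∈ Ideal.jacobson (⊥ : Ideal R) := by
  rw [Ideal.mem_jacobson_iff]
  intro y
  obtain ⟨u, hu⟩ := (h y).isUnit_one_add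
  refine ⟨(u⁻¹ : Rˣ), ?_⟩
  have : ((u⁻¹ : Rˣ) : R) * (1 + y * x) = 1 := by rw [← hu]; simp
  rw [Ideal.mem_bot, mul_assoc, ← this]
  noncomm_ring

lemma ssimple_jac {R : Type*} [Ring R] [IsSemisimpleRing R] : Ideal.jacobson (⊥ : Ideal R) = ⊥ := by
  rw [Ideal.jacobson_bot]
  exact IsArtinianRing.isSemisimpleRing_iff_jacobson.1 inferInstance

lemma part_a : Squarefree (minpoly F A) ↔ IsSemisimpleRing ↥(Subalgebra.centralizer F {A}) := by
  constructor
  · intro h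
    have : IsSemisimpleModule F[X] (MV A) :=
      Module.End.isSemisimple_of_squarefree_aeval_eq_zero h (by
        rw [← Matrix.minpoly_toLin']; exact minpoly.aeval _ _)
    have : IsSemisimpleRing (Module.End F[X] (MV A)) := IsSemisimpleRing.moduleEnd ..
    exact RingEquiv.isSemisimpleRing (R := Module.End F[X] (MV A)) (S := ↥(Subalgebra.centralizer F {A})) (centEquiv A).symm
  · intro h q hq
    obtain ⟨r, hr⟩ := hq
    have hint : IsIntegral F A := Algebra.IsIntegral.isIntegral A
    have h0 := minpoly.ne_zero hint
    have hc : ∀ p : F[X], aeval A p ∈ Subalgebra.centralizer F {A} := by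
      intro p
      rw [Subalgebra.mem_centralizer_iff]
      intro B hB
      rw [Set.mem_singleton_iff] at hB
      rw [hB]
      have : Commute (aeval A (X : F[X])) (aeval A p) := by
        unfold Commute SemiconjBy
        rw [← map_mul, ← map_mul, mul_comm]
      simpa using this.eq
    let x : Subalgebra.centralizer F {A} := ⟨aeval A (q * r), hc _⟩
    have hx2 : x * x = 0 := by
      apply Subtype.ext
      show aeval A (q * r) * aeval A (q * r) = 0
      rw [← map_mul, show q * r * (q * r) = q * q * r * r by ring, ← hr, map_mul, minpoly.aeval, zero_mul]
    have hcomm : ∀ y, Commute y x := by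
      intro y
      apply Subtype.ext
      show y.1 * aeval A (q * r) = aeval A (q * r) * y.1
      have := cent_comm_aeval A y (q * r)
      apply Matrix.toLin'.injective
      have h2 : aeval (Matrix.toLin' A) (q * r) = Matrix.toLin' (aeval A (q * r)) := by
        exact (aeval_algHom_apply (Matrix.toLinAlgEquiv' : _ ≃ₐ[F] _).toAlgHom A (q * r))
      rw [h2] at this
      rw [Matrix.toLin'_mul, Matrix.toLin'_mul]
      exact this
    have hx : x ∈ Ideal.jacobson (⊥ : Ideal ↥(Subalgebra.centralizer F {A})) := by
      apply mem_jac_of_nil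
      intro y
      exact ⟨2, by rw [(hcomm y).mul_pow, pow_two x, hx2, mul_zero]⟩
    rw [ssimple_jac, Ideal.mem_bot] at hx
    have hx' : aeval A (q * r) = 0 := congrArg Subtype.val hx
    have hd := minpoly.dvd F A hx'
    obtain ⟨s, hs⟩ := hd
    have hqr : q * r ≠ 0 := by
      intro h; apply h0; rw [hr, mul_assoc, h, mul_zero]
    rw [hr] at hs
    have : (q * r) * (q * s) = (q * r) * 1 := by linear_combination -hs
    exact IsUnit.of_mul_eq_one _ (mul_left_cancel₀ hqr this)

lemma irr_dvd_minpoly (p : F[X]) (hp : Irreducible p) (h : p ∣ A.charpoly) : p ∣ minpoly F A := by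
  have : Fact (Irreducible p) := ⟨hp⟩
  let K := AdjoinRoot p
  let f : F →+* K := AdjoinRoot.of p
  let B : Matrix (Fin n) (Fin n) K := A.map f
  have hB : B.charpoly = A.charpoly.map f := Matrix.charpoly_map A f
  have hr : IsRoot B.charpoly (AdjoinRoot.root p) := by
    rw [hB, IsRoot, eval_map]
    obtain ⟨c, hc⟩ := h
    rw [hc, eval₂_mul, AdjoinRoot.eval₂_root, zero_mul]
  have hs := Matrix.mem_spectrum_of_isRoot_charpoly hr
  have h0 : aeval B ((minpoly F A).map f) = 0 := by
    have h1 : aeval B ((minpoly F A).map (algebraMap F K)) = aeval B (minpoly F A) :=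
      aeval_map_algebraMap K B _
    have h2 : aeval B (minpoly F A) = (aeval A (minpoly F A)).map (algebraMap F K) :=
      aeval_algHom_apply ((Algebra.ofId F K).mapMatrix (m := Fin n)) A (minpoly F A)
    refine h1.trans (h2.trans ?_)
    rw [minpoly.aeval]
    simp
  have h3 := spectrum.subset_polynomial_aeval B ((minpoly F A).map f) ⟨_, hs, rfl⟩
  rw [h0] at h3
  have : Nontrivial (Matrix (Fin n) (Fin n) K) := by
    by_contra hn
    rw [not_nontrivial_iff_subsingleton] at hn
    exact spectrum.mem_iff.1 hs (isUnit_of_subsingleton _)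
  rw [spectrum.zero_eq, Set.mem_singleton_iff] at h3
  beta_reduce at h3
  rw [eval_map] at h3
  apply AdjoinRoot.mk_eq_zero.1
  rw [← AdjoinRoot.aeval_eq]
  exact h3

lemma charpoly_dvd (h : Squarefree A.charpoly) : A.charpoly ∣ minpoly F A := by
  have hint : IsIntegral F A := Algebra.IsIntegral.isIntegral A
  have h0 := minpoly.ne_zero hint
  have hc0 : A.charpoly ≠ 0 := (Matrix.charpoly_monic A).ne_zero
  classical
  rw [UniqueFactorizationMonoid.dvd_iff_normalizedFactors_le_normalizedFactors hc0 h0]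
  rw [Multiset.le_iff_subset ((UniqueFactorizationMonoid.squarefree_iff_nodup_normalizedFactors hc0).1 h)]
  intro p hp
  rw [UniqueFactorizationMonoid.mem_normalizedFactors_iff' hc0] at hp
  rw [UniqueFactorizationMonoid.mem_normalizedFactors_iff' h0]
  exact ⟨hp.1, hp.2.1, irr_dvd_minpoly A p hp.1 hp.2.2⟩

lemma MV_ann : Module.annihilator F[X] (MV A) = Ideal.span {minpoly F A} := by
  rw [← Matrix.minpoly_toLin']
  show Module.annihilator F[X] (AEval F (Fin n → F) (Matrix.toLin' A)) = _
  rw [AEval.annihilator_eq_ker_aeval, minpoly.ker_aeval_eq_span_minpoly]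

lemma MV_finrank : Module.finrank F (MV A) = n := by
  rw [← (AEval'.of (Matrix.toLin' A)).finrank_eq]; simp

lemma minpoly_eq_charpoly (h : (minpoly F A).natDegree = n) : minpoly F A = A.charpoly := by
  have hint : IsIntegral F A := Algebra.IsIntegral.isIntegral A
  symm
  apply eq_of_monic_of_dvd_of_natDegree_le (minpoly.monic hint) (Matrix.charpoly_monic A) (Matrix.minpoly_dvd_charpoly A)
  rw [Matrix.charpoly_natDegree_eq_dim, h]; simp

noncomputable def cyc (v : MV A) (hv : LinearMap.ker (LinearMap.toSpanSingleton F[X] _ v) = Module.annihilator F[X] (MV A)) :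
   (F[X] ⧸ Ideal.span {minpoly F A}) ≃ₗ[F[X]] (LinearMap.range (LinearMap.toSpanSingleton F[X] _ v)) :=
  (Submodule.quotEquivOfEq _ _ (by rw [hv, MV_ann])).trans (LinearMap.quotKerEquivRange _)

lemma cyc_finrank (v : MV A) (hv : LinearMap.ker (LinearMap.toSpanSingleton F[X] _ v) = Module.annihilator F[X] (MV A)) :
   Module.finrank F ((LinearMap.range (LinearMap.toSpanSingleton F[X] _ v)).restrictScalars F) = (minpoly F A).natDegree := by
  have hint : IsIntegral F A := Algebra.IsIntegral.isIntegral A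
  rw [← finrank_quotient_span_eq_natDegree]
  exact ((cyc A v hv).restrictScalars F).finrank_eq.symm

lemma cyc_top_iff (v : MV A) (hv : LinearMap.ker (LinearMap.toSpanSingleton F[X] _ v) = Module.annihilator F[X] (MV A)) :
   (minpoly F A).natDegree = n ↔ LinearMap.range (LinearMap.toSpanSingleton F[X] _ v) = ⊤ := by
  rw [← cyc_finrank A v hv]
  constructor
  · intro h
    rw [← Submodule.restrictScalars_eq_top_iff F]
    apply Submodule.eq_top_of_finrank_eq
    rw [h, MV_finrank]
  · intro h
    rw [h, Submodule.restrictScalars_top, finrank_top, MV_finrank]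

lemma part_b {F : Type u} [Field F] {n : ℕ} (A : Matrix (Fin n) (Fin n) F) : (Squarefree (Matrix.charpoly A) ↔
      ∃ (m : ℕ) (Fi : Fin m → Type u) (_ : ∀ i, Field (Fi i)),
        Nonempty (↥(Subalgebra.centralizer F {A}) ≃+* ∀ i, Fi i)) := by
  obtain ⟨v, hv⟩ := Module.exists_ker_toSpanSingleton_eq_annihilator F[X] (MV A)
  constructor
  · intro h
    have hss := (part_a A).1 (h.squarefree_of_dvd (Matrix.minpoly_dvd_charpoly A))
    have hd : (minpoly F A).natDegree = n := by
      have hint : IsIntegral F A := Algebra.IsIntegral.isIntegral A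
      have h1 := natDegree_le_of_dvd (charpoly_dvd A h) (minpoly.ne_zero hint)
      have h2 := natDegree_le_of_dvd (Matrix.minpoly_dvd_charpoly A) h.ne_zero
      rw [Matrix.charpoly_natDegree_eq_dim, Fintype.card_fin] at h1 h2
      omega
    have htop := (cyc_top_iff A v hv).1 hd
    have hcomm : ∀ f g : Module.End F[X] (MV A), f * g = g * f := by
      intro f g
      have hs : ∀ w : MV A, ∃ p : F[X], p • v = w := by
        intro w
        have : w ∈ LinearMap.range (LinearMap.toSpanSingleton F[X] _ v) := by rw [htop]; trivial
        exact this
      refine LinearMap.ext fun w => ?_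
      obtain ⟨p, rfl⟩ := hs w
      obtain ⟨a, ha⟩ := hs (f v)
      obtain ⟨b, hb⟩ := hs (g v)
      simp only [Module.End.mul_apply, map_smul, ← ha, ← hb]
      rw [smul_comm a b]
    let _ : CommRing ↥(Subalgebra.centralizer F {A}) :=
      { (inferInstance : Ring ↥(Subalgebra.centralizer F {A})) with
        mul_comm := fun x y => (centEquiv A).injective (by rw [map_mul, map_mul]; exact hcomm _ _) }
    have hss' : IsSemisimpleRing ↥(Subalgebra.centralizer F {A}) := hss
    have hart : IsArtinianRing ↥(Subalgebra.centralizer F {A}) := inferInstance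
    have hred : IsReduced ↥(Subalgebra.centralizer F {A}) := inferInstance
    let e := IsArtinianRing.equivPi ↥(Subalgebra.centralizer F {A})
    let eq := Finite.equivFin (MaximalSpectrum ↥(Subalgebra.centralizer F {A}))
    refine ⟨_, fun i => ↥(Subalgebra.centralizer F {A}) ⧸ (eq.symm i).asIdeal, fun i => Ideal.Quotient.field (eq.symm i).asIdeal, ⟨?_⟩⟩
    exact e.toRingEquiv.trans (RingEquiv.piCongrLeft' (fun I : MaximalSpectrum ↥(Subalgebra.centralizer F {A}) => ↥(Subalgebra.centralizer F {A}) ⧸ I.asIdeal) eq)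
  · rintro ⟨m, Fi, hFi, ⟨e⟩⟩
    have hss : IsSemisimpleRing ↥(Subalgebra.centralizer F {A}) := RingEquiv.isSemisimpleRing (R := ∀ i, Fi i) e.symm
    have hsq := (part_a A).2 hss
    have : IsSemisimpleModule F[X] (MV A) :=
      Module.End.isSemisimple_of_squarefree_aeval_eq_zero hsq (by
        rw [← Matrix.minpoly_toLin']; exact minpoly.aeval _ _)
    have hcomm : ∀ f g : Module.End F[X] (MV A), f * g = g * f := by
      intro f g
      apply (centEquiv A).symm.injective
      apply e.injective
      rw [map_mul, map_mul, map_mul, map_mul, mul_comm]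
    suffices LinearMap.range (LinearMap.toSpanSingleton F[X] _ v) = ⊤ by
      rw [← minpoly_eq_charpoly A ((cyc_top_iff A v hv).2 this)]
      exact hsq
    set P := LinearMap.range (LinearMap.toSpanSingleton F[X] _ v) with hP
    obtain ⟨W, hW⟩ := exists_isCompl P
    suffices W = ⊥ by
      rw [this] at hW
      exact hW.sup_eq_top ▸ (by simp)
    rw [Submodule.eq_bot_iff]
    intro w hw
    -- the map P → V sending v to w
    let g : (F[X] ⧸ Ideal.span {minpoly F A}) →ₗ[F[X]] MV A :=
      Submodule.liftQ _ (LinearMap.toSpanSingleton F[X] _ w) (by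
        rw [← MV_ann]
        intro p hp
        exact Module.mem_annihilator.1 hp w)
    let π := Submodule.projectionOnto P W hW
    let f : Module.End F[X] (MV A) := g ∘ₗ (cyc A v hv).symm.toLinearMap ∘ₗ π
    let q : Module.End F[X] (MV A) := P.subtype ∘ₗ π
    have hvP : v ∈ P := ⟨1, by simp⟩
    have hqv : π v = ⟨v, hvP⟩ := Submodule.projectionOnto_apply_left hW ⟨v, hvP⟩
    have hfv : f v = w := by
      have : (cyc A v hv).symm ⟨v, hvP⟩ = Submodule.Quotient.mk 1 := by
        rw [LinearEquiv.symm_apply_eq]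
        apply Subtype.ext
        have : cyc A v hv (Submodule.Quotient.mk 1) = (⟨(1 : F[X]) • v, ⟨1, rfl⟩⟩ : P) := rfl
        rw [this]
        simp
      simp only [f, LinearMap.comp_apply, hqv, LinearEquiv.coe_coe, this]
      exact one_smul F[X] w
    have := LinearMap.congr_fun (hcomm f q) v
    simp only [Module.End.mul_apply, hfv] at this
    have hq : q v = v := by simp only [q, LinearMap.comp_apply, hqv, Submodule.subtype_apply]
    rw [hq, hfv] at this
    rw [this]
    show ((π w : P) : MV A) = 0
    rw [show π w = 0 from Submodule.projectionOnto_apply_of_mem_right hW hw]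
    rfl
end

section partc
set_option linter.unusedSectionVars false
variable {F : Type*} [Field F] {ι : Type*} [Fintype ι] [DecidableEq ι] (e : ι → ℕ)

abbrev TN (F : Type*) [Field F] {ι : Type*} (e : ι → ℕ) := ∀ i : ι, F[X] ⧸ Ideal.span {(X : F[X]) ^ e i}


noncomputable def tEps (he : ∀ i, 0 < e i) (i : ι) : (F[X] ⧸ Ideal.span {(X : F[X]) ^ e i}) →+* F :=
  Ideal.Quotient.lift _ constantCoeff (by
    intro a ha
    rw [Ideal.mem_span_singleton] at ha
    obtain ⟨b, rfl⟩ := ha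
    rw [map_mul, map_pow, constantCoeff_apply, coeff_X_zero, zero_pow (he i).ne', zero_mul])

lemma tEps_mk (he : ∀ i, 0 < e i) (i : ι) (p : F[X]) : tEps e he i (Ideal.Quotient.mk _ p) = p.coeff 0 := rfl

lemma tEps_smul (he : ∀ i, 0 < e i) (i : ι) (p : F[X]) (y : F[X] ⧸ Ideal.span {(X : F[X]) ^ e i}) :
    tEps e he i (p • y) = p.coeff 0 * tEps e he i y := by
  have : p • y = Ideal.Quotient.mk _ p * y := rfl
  rw [this, map_mul, tEps_mk]

lemma tEps_zero (he : ∀ i, 0 < e i) (i : ι) (y : F[X] ⧸ Ideal.span {(X : F[X]) ^ e i}) (h : tEps e he i y = 0) :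
    ∃ z, y = (X : F[X]) • z := by
  obtain ⟨p, rfl⟩ := Ideal.Quotient.mk_surjective y
  rw [tEps_mk] at h
  obtain ⟨q, rfl⟩ := X_dvd_iff.2 h
  exact ⟨Ideal.Quotient.mk _ q, rfl⟩

noncomputable def tPhi (he : ∀ i, 0 < e i) (f : Module.End F[X] (TN F e)) : Matrix ι ι F :=
  fun i l => tEps e he i (f (Pi.single l 1) i)

lemma tPhi_expand (he : ∀ i, 0 < e i) (f : Module.End F[X] (TN F e)) (y : TN F e) (i : ι) :
    tEps e he i (f y i) = ∑ l, tPhi e he f i l * tEps e he l (y l) := by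
  choose P hP using fun l => Ideal.Quotient.mk_surjective (y l)
  have hy : y = ∑ l, P l • (Pi.single l 1 : TN F e) := by
    funext j
    rw [Finset.sum_apply, Finset.sum_eq_single j]
    · rw [Pi.smul_apply, Pi.single_eq_same, ← hP j]
      show _ = Ideal.Quotient.mk _ (P j) * 1
      rw [mul_one]
    · intro b _ hb
      rw [Pi.smul_apply, Pi.single_eq_of_ne hb.symm, smul_zero]
    · simp
  conv_lhs => rw [hy]
  rw [map_sum, Finset.sum_apply, map_sum]
  refine Finset.sum_congr rfl fun l _ => ?_
  rw [map_smul, Pi.smul_apply, tEps_smul, ← hP l, tEps_mk, mul_comm]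
  rfl

lemma tPhi_lt (he : ∀ i, 0 < e i) (f : Module.End F[X] (TN F e)) (i l : ι) (h : e l < e i) : tPhi e he f i l = 0 := by
  unfold tPhi
  obtain ⟨q, hq⟩ := Ideal.Quotient.mk_surjective (f (Pi.single l 1) i)
  have h0 : (X : F[X]) ^ e l • (Pi.single l 1 : TN F e) = 0 := by
    rw [← Pi.single_smul]
    convert Pi.single_zero l
    show Ideal.Quotient.mk _ ((X : F[X]) ^ e l) * 1 = 0
    rw [mul_one, Ideal.Quotient.eq_zero_iff_mem]
    exact Ideal.mem_span_singleton_self _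
  have h1 : (X : F[X]) ^ e l • (f (Pi.single l 1) i) = 0 := by
    rw [← Pi.smul_apply, ← map_smul, h0, map_zero]; rfl
  rw [← hq] at h1 ⊢
  have h2 : Ideal.Quotient.mk (Ideal.span {(X : F[X]) ^ e i}) ((X : F[X]) ^ e l * q) = 0 := h1
  rw [Ideal.Quotient.eq_zero_iff_mem, Ideal.mem_span_singleton] at h2
  rw [tEps_mk, ← X_dvd_iff]
  have h3 : (X : F[X]) ^ e l * X ∣ X ^ e l * q := by
    rw [← pow_succ]
    exact (pow_dvd_pow _ h).trans h2
  exact (mul_dvd_mul_iff_left (pow_ne_zero _ X_ne_zero)).1 h3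

noncomputable def tPhiHom (he : ∀ i, 0 < e i) : Module.End F[X] (TN F e) →+* Matrix ι ι F where
  toFun := tPhi e he
  map_one' := by
    ext i l
    by_cases h : i = l
    · subst h; simp [tPhi]
    · simp [tPhi, h]
  map_mul' f g := by
    ext i l
    rw [Matrix.mul_apply]
    exact tPhi_expand e he f _ i
  map_zero' := by ext; simp [tPhi]
  map_add' f g := by ext; simp [tPhi]

lemma tPhi_surj (he : ∀ i, 0 < e i) (M : Matrix ι ι F) (hM : ∀ i j, e i ≠ e j → M i j = 0) :
    ∃ f, tPhi e he f = M := by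
  classical
  let h : ∀ i l : ι, (F[X] ⧸ Ideal.span {(X : F[X]) ^ e l}) →ₗ[F[X]] (F[X] ⧸ Ideal.span {(X : F[X]) ^ e i}) :=
    fun i l => if hh : e i = e l then
      Submodule.mapQ _ _ LinearMap.id (by rw [hh]; exact le_rfl) else 0
  have h1 : ∀ i l, e i = e l → h i l 1 = 1 := by
    intro i l hh
    simp only [h, dif_pos hh]
    rfl
  refine ⟨LinearMap.pi fun i => ∑ l, (C (M i l)) • (h i l ∘ₗ LinearMap.proj l), ?_⟩
  ext i j
  simp only [tPhi, LinearMap.pi_apply, LinearMap.sum_apply, LinearMap.smul_apply, LinearMap.comp_apply,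
    LinearMap.proj_apply, map_sum, tEps_smul, coeff_C_zero]
  rw [Finset.sum_eq_single j]
  · rw [Pi.single_eq_same]
    by_cases hh : e i = e j
    · rw [h1 i j hh, map_one, mul_one]
    · rw [hM i j hh, zero_mul]
  · intro b _ hb
    rw [Pi.single_eq_of_ne hb, map_zero, map_zero, mul_zero]
  · simp

lemma tNil (he : ∀ i, 0 < e i) (f : Module.End F[X] (TN F e)) (hf : ∀ i j, e i = e j → tPhi e he f i j = 0) :
    IsNilpotent f := by
  obtain ⟨b, hb⟩ : ∃ b, ∀ i, e i < b := ⟨(∑ i, e i) + 1, fun i =>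
    Nat.lt_succ_of_le (Finset.single_le_sum (f := e) (fun _ _ => Nat.zero_le _) (Finset.mem_univ i))⟩
  have h1 : ∀ k i j, e j < e i + k → (tPhi e he f ^ k) i j = 0 := by
    intro k
    induction k with
    | zero =>
      intro i j h
      rw [pow_zero, Matrix.one_apply_ne]
      rintro rfl
      omega
    | succ k ih =>
      intro i j h
      rw [pow_succ, Matrix.mul_apply]
      refine Finset.sum_eq_zero fun l _ => ?_
      by_cases hl : e l < e i + k
      · rw [ih i l hl, zero_mul]
      · rcases lt_trichotomy (e l) (e j) with h2 | h2 | h2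
        · omega
        · rw [hf l j h2, mul_zero]
        · rw [tPhi_lt e he f l j h2, mul_zero]
  have h2 : tPhi e he (f ^ b) = 0 := by
    have : tPhi e he (f ^ b) = tPhi e he f ^ b := map_pow (tPhiHom e he) f b
    rw [this]
    ext i j
    exact h1 b i j (by have := hb j; omega)
  have h3 : ∀ y, ∃ z, (f ^ b) y = (X : F[X]) • z := by
    intro y
    have : ∀ i, ∃ z, (f ^ b) y i = (X : F[X]) • z := by
      intro i
      apply tEps_zero e he
      rw [tPhi_expand, h2]
      simp
    choose z hz using this
    exact ⟨z, funext hz⟩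
  have h4 : ∀ s y, ∃ z, ((f ^ b) ^ s) y = ((X : F[X]) ^ s) • z := by
    intro s
    induction s with
    | zero => intro y; exact ⟨y, by simp⟩
    | succ s ih =>
      intro y
      obtain ⟨z, hz⟩ := ih y
      obtain ⟨w, hw⟩ := h3 z
      refine ⟨w, ?_⟩
      rw [pow_succ', Module.End.mul_apply, hz, map_smul, hw, smul_smul, pow_succ]
  refine ⟨b * b, ?_⟩
  rw [pow_mul]
  refine LinearMap.ext fun y => ?_
  obtain ⟨z, hz⟩ := h4 b y
  rw [hz]
  funext i
  obtain ⟨p, hp⟩ := Ideal.Quotient.mk_surjective (z i)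
  rw [Pi.smul_apply, ← hp]
  show Ideal.Quotient.mk _ ((X : F[X]) ^ b * p) = 0
  rw [Ideal.Quotient.eq_zero_iff_mem, Ideal.mem_span_singleton]
  exact (pow_dvd_pow _ (hb i).le).mul_right p

lemma ker_eq_jac {R S : Type*} [Ring R] [Ring S] [IsSemisimpleRing S] (φ : R →+* S)
    (hs : Function.Surjective φ) (hn : ∀ x, φ x = 0 → IsNilpotent x) :
    RingHom.ker φ = Ideal.jacobson (⊥ : Ideal R) := by
  apply le_antisymm
  · intro x hx
    apply mem_jac_of_nil
    intro y
    apply hn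
    rw [map_mul, (RingHom.mem_ker).1 hx, mul_zero]
  · have : RingHomSurjective φ := ⟨hs⟩
    intro x hx
    rw [Ideal.jacobson_bot] at hx
    have h := Ring.le_comap_jacobson (f := φ) hx
    rw [Ideal.mem_comap, ← Ideal.jacobson_bot, ssimple_jac] at h
    exact h

lemma tMain [Nonempty ι] (he : ∀ i, 0 < e i) : ∃ (m : ℕ) (d : Fin m → ℕ)
        (φ : Module.End F[X] (TN F e) →+* ∀ j, Matrix (Fin (d j)) (Fin (d j)) F),
        0 < m ∧ (∀ j, 0 < d j) ∧ Function.Surjective φ ∧ ∀ x, φ x = 0 → IsNilpotent x := by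
  classical
  let E : Finset ℕ := Finset.univ.image e
  let q : Fin E.card ≃ E := E.equivFin.symm
  let S : Fin E.card → Type _ := fun k => {i : ι // e i = (q k).1}
  let d : Fin E.card → ℕ := fun k => Fintype.card (S k)
  let idx : ∀ k, Fin (d k) ≃ S k := fun k => (Fintype.equivFin (S k)).symm
  have hidx : ∀ k a, e (idx k a).1 = (q k).1 := fun k a => (idx k a).2
  have hcov : ∀ i, ∃ k, e i = (q k).1 := fun i =>
    ⟨q.symm ⟨e i, Finset.mem_image_of_mem e (Finset.mem_univ i)⟩, by simp⟩
  have hsum : ∀ (k : Fin E.card) (g : ι → F), (∀ i, e i ≠ (q k).1 → g i = 0) →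
      ∑ i, g i = ∑ a, g (idx k a).1 := by
    intro k g hg
    rw [Equiv.sum_comp (idx k) (fun s => g s.1)]
    rw [← Finset.sum_subtype (Finset.univ.filter fun i => e i = (q k).1) (by simp) g]
    symm
    apply Finset.sum_subset (Finset.subset_univ _)
    intro i _ hi
    apply hg
    simpa using hi
  let φ : Module.End F[X] (TN F e) →+* ∀ j, Matrix (Fin (d j)) (Fin (d j)) F :=
    { toFun := fun f k a b => tPhi e he f (idx k a).1 (idx k b).1
      map_one' := by
        have h1 : tPhi e he (1 : Module.End F[X] (TN F e)) = 1 := map_one (tPhiHom e he)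
        funext k
        ext a b
        rw [h1, Pi.one_apply, Matrix.one_apply, Matrix.one_apply]
        simp [Subtype.val_inj]
      map_mul' := fun f g => by
        have h1 : tPhi e he (f * g) = tPhi e he f * tPhi e he g := map_mul (tPhiHom e he) f g
        funext k
        ext a b
        rw [h1, Matrix.mul_apply]
        refine (hsum k (fun l => tPhi e he f (idx k a).1 l * tPhi e he g l (idx k b).1) ?_).trans rfl
        intro i hi
        rcases lt_or_gt_of_ne hi with h | h
        · rw [tPhi_lt e he f _ i (by rw [hidx]; exact h), zero_mul]
        · rw [tPhi_lt e he g i _ (by rw [hidx]; exact h), mul_zero]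
      map_zero' := by
        have h1 : tPhi e he (0 : Module.End F[X] (TN F e)) = 0 := map_zero (tPhiHom e he)
        funext k
        ext a b
        rw [h1]; rfl
      map_add' := fun f g => by
        have h1 : tPhi e he (f + g) = tPhi e he f + tPhi e he g := map_add (tPhiHom e he) f g
        funext k
        ext a b
        rw [h1]; rfl }
  refine ⟨E.card, d, φ, ?_, ?_, ?_, ?_⟩
  · rw [Finset.card_pos]
    exact Finset.univ_nonempty.image e
  · intro k
    obtain ⟨i, -, hi⟩ := Finset.mem_image.1 (q k).2
    exact Fintype.card_pos_iff.2 ⟨⟨i, hi⟩⟩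
  · intro M
    let M' : Matrix ι ι F := fun i j =>
      if h : ∃ k, e i = (q k).1 ∧ e j = (q k).1 then
        M h.choose ((idx h.choose).symm ⟨i, h.choose_spec.1⟩) ((idx h.choose).symm ⟨j, h.choose_spec.2⟩)
      else 0
    obtain ⟨f, hf⟩ := tPhi_surj e he M' (by
      intro i j hij
      simp only [M']
      rw [dif_neg]
      rintro ⟨k, h1, h2⟩
      exact hij (h1.trans h2.symm))
    refine ⟨f, ?_⟩
    have key : ∀ k (i j : S k), M' i.1 j.1 = M k ((idx k).symm i) ((idx k).symm j) := by
      intro k i j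
      have h : ∃ k, e i.1 = (q k).1 ∧ e j.1 = (q k).1 := ⟨k, i.2, j.2⟩
      simp only [M', dif_pos h]
      have hk : h.choose = k := by
        apply q.injective
        apply Subtype.ext
        rw [← h.choose_spec.1]
        exact i.2
      have aux : ∀ k' (hk : k' = k) (h1 : e i.1 = (q k').1) (h2 : e j.1 = (q k').1),
          M k' ((idx k').symm ⟨i.1, h1⟩) ((idx k').symm ⟨j.1, h2⟩) = M k ((idx k).symm i) ((idx k).symm j) := by
        intro k' hk h1 h2
        subst hk
        rfl
      exact aux _ hk _ _
    funext k
    ext a b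
    show tPhi e he f (idx k a).1 (idx k b).1 = _
    rw [hf, key]
    simp
  · intro f hf
    apply tNil e he f
    intro i j hij
    obtain ⟨k, hk⟩ := hcov i
    have := congrFun (congrFun (congrFun hf k) ((idx k).symm ⟨i, hk⟩)) ((idx k).symm ⟨j, hij ▸ hk⟩)
    have h2 : tPhi e he f (idx k ((idx k).symm ⟨i, hk⟩)).1 (idx k ((idx k).symm ⟨j, hij ▸ hk⟩)).1 = 0 := this
    simpa using h2
end partc

lemma part_c {F : Type*} [Field F] {n : ℕ} (hn : 0 < n) (A : Matrix (Fin n) (Fin n) F) (hA : IsNilpotent A) :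
      ∃ (m : ℕ) (d : Fin m → ℕ)
        (φ : ↥(Subalgebra.centralizer F {A}) →+*
          ∀ j, Matrix (Fin (d j)) (Fin (d j)) F),
        0 < m ∧ (∀ j, 0 < d j) ∧ Function.Surjective φ ∧
          RingHom.ker φ = Ideal.jacobson (⊥ : Ideal ↥(Subalgebra.centralizer F {A})) := by
  classical
  obtain ⟨N, hN⟩ := hA
  have htor : Module.IsTorsion' (MV A) (Submonoid.powers (X : F[X])) := by
    intro v
    refine ⟨⟨X ^ N, N, rfl⟩, ?_⟩
    obtain ⟨v, rfl⟩ := (AEval'.of (Matrix.toLin' A)).surjective v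
    show (X ^ N : F[X]) • (AEval'.of (Matrix.toLin' A) v) = 0
    rw [AEval'.X_pow_smul_of, ← Matrix.toLin'_pow, hN]
    simp
  obtain ⟨D, k, ⟨l⟩⟩ := Module.torsion_by_prime_power_decomposition (irreducible_X) htor
  let ι := {i : Fin D // 0 < k i}
  let e : ι → ℕ := fun i => k i.1
  let s : (∀ i : Fin D, F[X] ⧸ Ideal.span {(X : F[X]) ^ k i}) →ₗ[F[X]] TN F e :=
    LinearMap.pi fun i => LinearMap.proj i.1
  have hs : Function.Bijective s := by
    constructor
    · intro x y h
      funext i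
      by_cases hi : 0 < k i
      · exact congrFun h ⟨i, hi⟩
      · have : Subsingleton (F[X] ⧸ Ideal.span {(X : F[X]) ^ k i}) := by
          rw [Ideal.Quotient.subsingleton_iff, Ideal.span_singleton_eq_top]
          rw [Nat.eq_zero_of_not_pos hi, pow_zero]
          exact isUnit_one
        exact Subsingleton.elim _ _
    · intro y
      refine ⟨fun i => if h : 0 < k i then y ⟨i, h⟩ else 0, ?_⟩
      funext i
      exact dif_pos i.2
  let E : MV A ≃ₗ[F[X]] TN F e :=
    (l.trans (DirectSum.linearEquivFunOnFintype _ _ _)).trans (LinearEquiv.ofBijective s hs)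
  have hne : Nonempty ι := by
    by_contra h
    rw [not_nonempty_iff] at h
    have : Subsingleton (MV A) := E.toEquiv.subsingleton
    have h1 := MV_finrank A
    rw [Module.finrank_zero_of_subsingleton] at h1
    omega
  obtain ⟨m, d, φ, hm, hd, hsurj, hnil⟩ := tMain (F := F) e (fun i => i.2)
  let c : ↥(Subalgebra.centralizer F {A}) ≃+* Module.End F[X] (TN F e) :=
    (centEquiv A).trans E.conjRingEquiv
  refine ⟨m, d, φ.comp c.toRingHom, hm, hd, hsurj.comp c.surjective, ?_⟩
  apply ker_eq_jac
  · exact hsurj.comp c.surjective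
  · intro x hx
    have : IsNilpotent (c x) := hnil _ hx
    exact (IsNilpotent.map_iff c.injective).1 this

end helpers


/-- Let `F` be a field, `n` a positive integer, and `A ∈ Mat_n(F)`, with centraliser
`C_F(A) = { X : X * A = A * X }` (a finite-dimensional `F`-algebra).  Then:
(a) the minimal polynomial of `A` is squarefree iff `C_F(A)` is a semisimple ring;
(b) the characteristic polynomial of `A` is squarefree iff `C_F(A)` is isomorphic
to a finite product of fields;
(c) if `A` is nilpotent, then `C_F(A)/J(C_F(A))` is isomorphic to
`∏_{j=1}^m Mat_{d_j}(F)` for some positive integers `m, d_1, …, d_m`; here the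
quotient by the Jacobson radical `J` is expressed by a surjective ring homomorphism
whose kernel is the Jacobson radical. -/
theorem stmt_19 {F : Type u} [Field F] {n : ℕ} (hn : 0 < n)
    (A : Matrix (Fin n) (Fin n) F) :
    (Squarefree (minpoly F A) ↔ IsSemisimpleRing ↥(Subalgebra.centralizer F {A})) ∧
    (Squarefree (Matrix.charpoly A) ↔
      ∃ (m : ℕ) (Fi : Fin m → Type u) (_ : ∀ i, Field (Fi i)),
        Nonempty (↥(Subalgebra.centralizer F {A}) ≃+* ∀ i, Fi i)) ∧
    (IsNilpotent A →
      ∃ (m : ℕ) (d : Fin m → ℕ)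
        (φ : ↥(Subalgebra.centralizer F {A}) →+*
          ∀ j, Matrix (Fin (d j)) (Fin (d j)) F),
        0 < m ∧ (∀ j, 0 < d j) ∧ Function.Surjective φ ∧
          RingHom.ker φ = Ideal.jacobson (⊥ : Ideal ↥(Subalgebra.centralizer F {A}))) := by
  exact ⟨part_a A, part_b A, part_c hn A⟩
end
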